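/- Fix an integer d ≥ 3 and a real p with 1/(d-1) < p < 1, and let q ∈ [0,1) satisfy q = (1-p+pq)^{d-1}. Set θ₂ = 1 − q − (d−1) p q (1−q) and η₂ = (1/2) p d (1 − q)². Then for every ε > 0 and b > 0 there exist c, C, R > 0 such that: if 𝒢 is a regular (b,d)-expander on n vertices with girth at least R, then with probability at least 1 − C·exp(−c n), the random graph G ∼ 𝒢_p satisfies | |V(C₁^{(2)}(G))|/n − θ₂ | < ε and | |E(C₁^{(2)}(G))|/n − η₂ | < ε, where C₁^{(2)}(G) is the 2-core of a largest connected component of G. -/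

import Mathlib

open scoped Classical symmDiff

noncomputable section

namespace Percolation

variable {V : Type} [Fintype V] [DecidableEq V]

/-- The edge set of `G` as a finset. -/
noncomputable def edgeFinset' (G : SimpleGraph V) : Finset (Sym2 V) :=
  Finset.univ.filter (· ∈ G.edgeSet)

/-- Probability that bond percolation on `G` with parameter `p` produces a spanning
subgraph satisfying `P`. -/
noncomputable def percProb (G : SimpleGraph V) (p : ℝ) (P : SimpleGraph V → Prop) : ℝ :=
  ∑ s ∈ (edgeFinset' G).powerset,
    (p ^ s.card * (1 - p) ^ ((edgeFinset' G).card - s.card)) *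
      (if P (SimpleGraph.fromEdgeSet (↑s)) then 1 else 0)

/-- Joint probability for two independent bond percolations on `G`. -/
noncomputable def percProb2 (G : SimpleGraph V) (p₁ p₂ : ℝ)
    (P : SimpleGraph V → SimpleGraph V → Prop) : ℝ :=
  ∑ s ∈ (edgeFinset' G).powerset, ∑ t ∈ (edgeFinset' G).powerset,
    (p₁ ^ s.card * (1 - p₁) ^ ((edgeFinset' G).card - s.card)) *
    (p₂ ^ t.card * (1 - p₂) ^ ((edgeFinset' G).card - t.card)) *
      (if P (SimpleGraph.fromEdgeSet (↑s)) (SimpleGraph.fromEdgeSet (↑t)) then 1 else 0)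

/-- Number of edges of `G` joining `S` to its complement. -/
noncomputable def cutCard (G : SimpleGraph V) (S : Finset V) : ℕ :=
  ((edgeFinset' G).filter (fun e => ∃ x ∈ S, ∃ y, y ∉ S ∧ e = s(x, y))).card

/-- `G` is a `(b,d)`-expander: max degree at most `d`, and every vertex set of size at most
`n/2` has at least `b|S|` edges to its complement. -/
def IsExpander (G : SimpleGraph V) (b : ℝ) (d : ℕ) : Prop :=
  (∀ v, (G.neighborSet v).ncard ≤ d) ∧
  ∀ S : Finset V, (S.card : ℝ) ≤ Fintype.card V / 2 → b * S.card ≤ cutCard G S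

/-- `G` is a regular `(b,d)`-expander. -/
def IsRegularExpander (G : SimpleGraph V) (b : ℝ) (d : ℕ) : Prop :=
  IsExpander G b d ∧ ∀ v, (G.neighborSet v).ncard = d

/-- The vertices of the connected component `c` of `G`. -/
noncomputable def compVerts (G : SimpleGraph V) (c : G.ConnectedComponent) : Finset V :=
  Finset.univ.filter (fun v => G.connectedComponentMk v = c)

/-- The edges of the connected component `c` of `G`. -/
noncomputable def compEdges (G : SimpleGraph V) (c : G.ConnectedComponent) : Finset (Sym2 V) :=
  (edgeFinset' G).filter (fun e => ∀ v ∈ e, G.connectedComponentMk v = c)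

/-- `c` is a largest connected component of `G`. -/
def IsLargestComp (G : SimpleGraph V) (c : G.ConnectedComponent) : Prop :=
  ∀ c' : G.ConnectedComponent, (compVerts G c').card ≤ (compVerts G c).card

/-- The 2-core of the connected component `c` of `G` : the maximal subgraph of `G`
supported inside `c` all of whose vertices have degree at least 2. -/
noncomputable def twoCoreComp (G : SimpleGraph V) (c : G.ConnectedComponent) : SimpleGraph V :=
  sSup {H : SimpleGraph V | H ≤ G ∧ (∀ v ∈ H.support, G.connectedComponentMk v = c) ∧
    ∀ v ∈ H.support, 2 ≤ (H.neighborSet v).ncard}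

/-- The event `A^R_{x,y}(H)`: the connected component of `y` in `H` with the edge `xy`
removed (if present) has at least `R` vertices. -/
def eventA (H : SimpleGraph V) (R : ℕ) (x y : V) : Prop :=
  R ≤ (compVerts (H.deleteEdges {s(x, y)})
        ((H.deleteEdges {s(x, y)}).connectedComponentMk y)).card

/-- `E₁(H)`: edges `xy` of `H` such that `A^R_{x,y}` or `A^R_{y,x}` holds. -/
noncomputable def E1set (H : SimpleGraph V) (R : ℕ) : Finset (Sym2 V) :=
  (edgeFinset' H).filter (fun e => ∃ x y, e = s(x, y) ∧ (eventA H R x y ∨ eventA H R y x))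

/-- `V₁(H)`: vertices `x` such that for some `y`, `xy ∈ E(H)` and `A^R_{x,y}` holds. -/
noncomputable def V1set (H : SimpleGraph V) (R : ℕ) : Finset V :=
  Finset.univ.filter (fun x => ∃ y, H.Adj x y ∧ eventA H R x y)

/-- `E₂(H)`: edges `xy` of `H` such that both `A^R_{x,y}` and `A^R_{y,x}` hold. -/
noncomputable def E2set (H : SimpleGraph V) (R : ℕ) : Finset (Sym2 V) :=
  (edgeFinset' H).filter (fun e => ∃ x y, e = s(x, y) ∧ eventA H R x y ∧ eventA H R y x)

/-- `V₂(H)`: vertices incident to an edge of `E₂(H)`. -/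
noncomputable def V2set (H : SimpleGraph V) (R : ℕ) : Finset V :=
  Finset.univ.filter (fun x => ∃ e ∈ E2set H R, x ∈ e)

/-- `V̄₁(H)`: vertices `y` such that `A^R_{x,y}(H)` holds for some `x`. -/
noncomputable def Vbar1 (H : SimpleGraph V) (R : ℕ) : Finset V :=
  Finset.univ.filter (fun y => ∃ x, eventA H R x y)

/-- `S` is `k`-thick in `H`: a union of pairwise disjoint subsets, each of size at least
`k`, each inducing a connected subgraph of `H`. -/
def IsThick (H : SimpleGraph V) (k : ℕ) (S : Finset V) : Prop :=
  ∃ P : Finset (Finset V),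
    (∀ T ∈ P, k ≤ T.card ∧ (H.induce (↑T : Set V)).Connected) ∧
    (↑P : Set (Finset V)).PairwiseDisjoint id ∧ S = P.biUnion id

/-- `S` is a separator of `K`. -/
def IsSeparator {W : Type} [Fintype W] (K : SimpleGraph W) (S : Finset W) : Prop :=
  ∃ A B : Finset W, Disjoint A B ∧ Disjoint A S ∧ Disjoint B S ∧
    (∀ w, w ∈ A ∨ w ∈ B ∨ w ∈ S) ∧
    (∀ a ∈ A, ∀ b ∈ B, ¬ K.Adj a b) ∧
    3 * A.card ≤ 2 * Fintype.card W ∧ 3 * B.card ≤ 2 * Fintype.card W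

set_option linter.unusedSectionVars false

/-- Expectation of `f s`, where `s ⊆ E` contains each element independently with
probability `p`. -/
def expect {α : Type*} (E : Finset α) (p : ℝ) (f : Finset α → ℝ) : ℝ :=
  ∑ s ∈ E.powerset, (p ^ s.card * (1 - p) ^ (E.card - s.card)) * f s

/-- The value of `f` depends only on the intersection of its argument with `A`. -/
def DeterminedBy {α β : Type*} (f : Finset α → β) (A : Set α) : Prop :=
  ∀ s t : Finset α, (∀ e ∈ A, e ∈ s ↔ e ∈ t) → f s = f t

section Expect

variable {α : Type*} [DecidableEq α] {E : Finset α} {p : ℝ}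

lemma DeterminedBy.comp {β γ : Type*} {f : Finset α → β} {A : Set α} (hf : DeterminedBy f A)
    (g : β → γ) : DeterminedBy (fun s => g (f s)) A :=
  fun s t hst => congrArg g (hf s t hst)

lemma DeterminedBy.insert_comp {β : Type*} {f : Finset α → β} {A : Set α}
    (hf : DeterminedBy f A) (e : α) : DeterminedBy (fun s => f (insert e s)) A := by
  refine fun s t hst => hf _ _ fun x hx => ?_
  simp [hst x hx]

lemma DeterminedBy.insert_eq {β : Type*} {f : Finset α → β} {A : Set α}
    (hf : DeterminedBy f A) {e : α} (he : e ∉ A) (s : Finset α) : f (insert e s) = f s := by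
  refine hf _ _ fun x hx => ?_
  have : x ≠ e := fun h => he (h ▸ hx)
  simp [this]

@[simp] lemma expect_empty (p : ℝ) (f : Finset α → ℝ) : expect ∅ p f = f ∅ := by
  simp [expect]

lemma expect_insert {e : α} (he : e ∉ E) (p : ℝ) (f : Finset α → ℝ) :
    expect (insert e E) p f =
      p * expect E p (fun s => f (insert e s)) + (1 - p) * expect E p f := by
  unfold expect
  rw [Finset.sum_powerset_insert he, Finset.mul_sum, Finset.mul_sum, add_comm]
  congr 1 <;> refine Finset.sum_congr rfl fun s hs => ?_
  · have hes : e ∉ s := fun h => he (Finset.mem_powerset.1 hs h)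
    rw [Finset.card_insert_of_notMem hes, Finset.card_insert_of_notMem he]
    simp only [Nat.add_sub_add_right]
    ring
  · rw [Finset.card_insert_of_notMem he,
      Nat.succ_sub (Finset.card_le_card (Finset.mem_powerset.1 hs)), pow_succ]
    ring

lemma expect_add (f g : Finset α → ℝ) :
    expect E p (fun s => f s + g s) = expect E p f + expect E p g := by
  simp [expect, mul_add, Finset.sum_add_distrib]

lemma expect_const_mul (c : ℝ) (f : Finset α → ℝ) :
    expect E p (fun s => c * f s) = c * expect E p f := by
  simp only [expect, Finset.mul_sum]
  exact Finset.sum_congr rfl fun s _ => by ring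

lemma expect_sum {ι : Type*} (I : Finset ι) (f : ι → Finset α → ℝ) :
    expect E p (fun s => ∑ i ∈ I, f i s) = ∑ i ∈ I, expect E p (f i) := by
  simp only [expect, Finset.mul_sum]
  exact Finset.sum_comm

@[simp] lemma expect_const (E : Finset α) (p c : ℝ) : expect E p (fun _ => c) = c := by
  induction E using Finset.induction_on with
  | empty => simp
  | insert e E he ih => rw [expect_insert he, ih]; ring

lemma expect_congr {f g : Finset α → ℝ} (h : ∀ s ⊆ E, f s = g s) :
    expect E p f = expect E p g :=
  Finset.sum_congr rfl fun s hs => by rw [h s (Finset.mem_powerset.1 hs)]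

lemma expect_mono (hp0 : 0 ≤ p) (hp1 : p ≤ 1) {f g : Finset α → ℝ}
    (h : ∀ s ⊆ E, f s ≤ g s) : expect E p f ≤ expect E p g := by
  refine Finset.sum_le_sum fun s hs => ?_
  have := h s (Finset.mem_powerset.1 hs)
  have : 0 ≤ 1 - p := by linarith
  gcongr

lemma expect_le_of_le (hp0 : 0 ≤ p) (hp1 : p ≤ 1) {f : Finset α → ℝ} {c : ℝ}
    (h : ∀ s ⊆ E, f s ≤ c) : expect E p f ≤ c :=
  (expect_mono hp0 hp1 h).trans_eq (expect_const E p c)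

lemma expect_mul {A B : Set α} (hAB : Disjoint A B) {f g : Finset α → ℝ}
    (hf : DeterminedBy f A) (hg : DeterminedBy g B) :
    expect E p (fun s => f s * g s) = expect E p f * expect E p g := by
  induction E using Finset.induction_on generalizing f g with
  | empty => simp
  | insert e E he ih =>
    simp only [expect_insert he]
    rw [ih hf hg, ih (hf.insert_comp e) (hg.insert_comp e)]
    by_cases heA : e ∈ A
    · have heB : e ∉ B := fun h => Set.disjoint_left.1 hAB heA h
      simp only [hg.insert_eq heB]
      ring
    · simp only [hf.insert_eq heA]
      ring

lemma DeterminedBy.prod {ι : Type*} (I : Finset ι) {A : ι → Set α} {f : ι → Finset α → ℝ}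
    (hf : ∀ i ∈ I, DeterminedBy (f i) (A i)) :
    DeterminedBy (fun s => ∏ i ∈ I, f i s) (⋃ i ∈ I, A i) := by
  refine fun s t hst => Finset.prod_congr rfl fun i hi => hf i hi s t fun e he => hst e ?_
  exact Set.mem_biUnion hi he

lemma expect_prod {ι : Type*} (I : Finset ι) {A : ι → Set α}
    (hA : (I : Set ι).PairwiseDisjoint A) {f : ι → Finset α → ℝ}
    (hf : ∀ i ∈ I, DeterminedBy (f i) (A i)) :
    expect E p (fun s => ∏ i ∈ I, f i s) = ∏ i ∈ I, expect E p (f i) := by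
  induction I using Finset.induction_on with
  | empty => simp
  | insert i I hi ih =>
    simp only [Finset.prod_insert hi]
    rw [expect_mul (A := A i) (B := ⋃ j ∈ I, A j) ?_ (hf i (Finset.mem_insert_self i I))
      (DeterminedBy.prod I fun j hj => hf j (Finset.mem_insert_of_mem hj)), ih]
    · exact hA.subset (by simp)
    · exact fun j hj => hf j (Finset.mem_insert_of_mem hj)
    · rw [Set.disjoint_iUnion₂_right]
      intro j hj
      exact hA (by simp) (by simp [hj]) (fun h => hi (h ▸ hj))

lemma expect_mem {e : α} (he : e ∈ E) :
    expect E p (fun s => if e ∈ s then 1 else 0) = p := by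
  obtain ⟨E, heE, rfl⟩ : ∃ F, e ∉ F ∧ insert e F = E :=
    ⟨E.erase e, Finset.notMem_erase e E, Finset.insert_erase he⟩
  rw [expect_insert heE]
  have : expect E p (fun s => if e ∈ s then (1 : ℝ) else 0) = expect E p (fun _ => 0) :=
    expect_congr fun s hs => if_neg fun h => heE (hs h)
  simp [this]

lemma determinedBy_mem (e : α) :
    DeterminedBy (fun s : Finset α => if e ∈ s then (1 : ℝ) else 0) {e} := by
  intro s t hst
  simp [hst e rfl]

lemma expect_subset {P : Finset α} (hP : P ⊆ E) :
    expect E p (fun s => if P ⊆ s then 1 else 0) = p ^ P.card := by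
  have h : ∀ s : Finset α, (if P ⊆ s then (1 : ℝ) else 0) = ∏ e ∈ P, if e ∈ s then 1 else 0 := by
    intro s
    by_cases hs : P ⊆ s
    · rw [if_pos hs, Finset.prod_eq_one fun e he => if_pos (hs he)]
    · obtain ⟨e, he, hes⟩ := Finset.not_subset.1 hs
      rw [if_neg hs, Finset.prod_eq_zero he (if_neg hes)]
  simp only [h]
  rw [expect_prod P (A := fun e => {e}) (fun e _ f _ hef => by simpa using hef)
    fun e _ => determinedBy_mem e, Finset.prod_congr rfl fun e he => expect_mem (hP he)]
  simp

/-- The union of independent random subsets with densities `p₁` and `p₂` is a random subset of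
density `p` where `1 - p = (1 - p₁) * (1 - p₂)`. -/
lemma expect_union {p₁ p₂ : ℝ} (h : 1 - p = (1 - p₁) * (1 - p₂)) (f : Finset α → ℝ) :
    expect E p f = expect E p₁ (fun s => expect E p₂ (fun t => f (s ∪ t))) := by
  induction E using Finset.induction_on generalizing f with
  | empty => simp
  | insert e E he ih =>
    simp only [expect_insert he, expect_add, expect_const_mul]
    rw [ih, ih]
    simp only [Finset.insert_union, Finset.union_insert, Finset.insert_idem]
    linear_combination
      ((expect E p₁ fun s => expect E p₂ fun t => f (s ∪ t)) -
        (expect E p₁ fun s => expect E p₂ fun t => f (insert e (s ∪ t)))) * h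

lemma exp_le_add_exp_sq (x : ℝ) : Real.exp x ≤ x + Real.exp (x ^ 2) := by
  have h2 := Real.add_one_le_exp (x ^ 2)
  rcases le_or_gt |x| 1 with h | h
  · have := (abs_le.1 (Real.abs_exp_sub_one_sub_id_le h)).2
    linarith
  · rcases lt_abs.1 h with h | h
    · have : Real.exp x ≤ Real.exp (x ^ 2) := Real.exp_le_exp.2 (by nlinarith)
      linarith
    · have : Real.exp x ≤ 1 := Real.exp_le_one_iff.2 (by linarith)
      nlinarith

/-- Exponential moment bound for functions with bounded differences. -/
lemma expect_exp_le (hp0 : 0 ≤ p) (hp1 : p ≤ 1) {f : Finset α → ℝ} {K : ℝ}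
    (hf : ∀ e s, |f (insert e s) - f s| ≤ K) (t : ℝ) :
    expect E p (fun s => Real.exp (t * f s)) ≤
      Real.exp (t * expect E p f + t ^ 2 * K ^ 2 * E.card) := by
  induction E using Finset.induction_on generalizing f with
  | empty => simp
  | insert e E he ih =>
    set g : Finset α → ℝ := fun s => p * f (insert e s) + (1 - p) * f s with hg
    have hgK : ∀ a s, |g (insert a s) - g s| ≤ K := by
      intro a s
      have h1 := abs_le.1 (hf a (insert e s))
      have h2 := abs_le.1 (hf a s)
      rw [Finset.insert_comm] at h1
      simp only [hg, abs_le]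
      constructor <;> nlinarith
    have hgE : expect (insert e E) p f = expect E p g := by
      rw [expect_insert he, hg, expect_add, expect_const_mul, expect_const_mul]
    have hstep : ∀ s, p * Real.exp (t * f (insert e s)) + (1 - p) * Real.exp (t * f s) ≤
        Real.exp (t ^ 2 * K ^ 2) * Real.exp (t * g s) := by
      intro s
      have hd := hf e s
      have key : ∀ y, |y| ≤ K → Real.exp (t * y) ≤ t * y + Real.exp (t ^ 2 * K ^ 2) := by
        intro y hy
        refine (exp_le_add_exp_sq _).trans ?_
        have : y ^ 2 ≤ K ^ 2 := sq_le_sq' (abs_le.1 hy).1 (abs_le.1 hy).2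
        have : Real.exp ((t * y) ^ 2) ≤ Real.exp (t ^ 2 * K ^ 2) := by
          rw [mul_pow]; gcongr
        linarith
      have h1 := key (f (insert e s) - g s) (by
        rw [abs_le] at hd ⊢; simp only [hg]; constructor <;> nlinarith)
      have h0 := key (f s - g s) (by
        rw [abs_le] at hd ⊢; simp only [hg]; constructor <;> nlinarith)
      have e1 : Real.exp (t * f (insert e s)) =
          Real.exp (t * (f (insert e s) - g s)) * Real.exp (t * g s) := by
        rw [← Real.exp_add]; ring_nf
      have e0 : Real.exp (t * f s) = Real.exp (t * (f s - g s)) * Real.exp (t * g s) := by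
        rw [← Real.exp_add]; ring_nf
      rw [e1, e0]
      have hm : p * Real.exp (t * (f (insert e s) - g s)) +
          (1 - p) * Real.exp (t * (f s - g s)) ≤ Real.exp (t ^ 2 * K ^ 2) := by
        have a1 := mul_le_mul_of_nonneg_left h1 hp0
        have a0 := mul_le_mul_of_nonneg_left h0 (sub_nonneg.2 hp1)
        have hz : p * (t * (f (insert e s) - g s)) + (1 - p) * (t * (f s - g s)) = 0 := by
          simp only [hg]; ring
        linarith
      have := mul_le_mul_of_nonneg_right hm (Real.exp_nonneg (t * g s))
      linarith
    calc expect (insert e E) p (fun s => Real.exp (t * f s))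
        = expect E p (fun s => p * Real.exp (t * f (insert e s)) +
            (1 - p) * Real.exp (t * f s)) := by
          rw [expect_insert he, expect_add, expect_const_mul, expect_const_mul]
      _ ≤ expect E p (fun s => Real.exp (t ^ 2 * K ^ 2) * Real.exp (t * g s)) :=
          expect_mono hp0 hp1 fun s _ => hstep s
      _ = Real.exp (t ^ 2 * K ^ 2) * expect E p (fun s => Real.exp (t * g s)) :=
          expect_const_mul _ _
      _ ≤ Real.exp (t ^ 2 * K ^ 2) * Real.exp (t * expect E p g + t ^ 2 * K ^ 2 * E.card) := by
          gcongr; exact ih hgK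
      _ = _ := by
          rw [← Real.exp_add, hgE, Finset.card_insert_of_notMem he]; push_cast; ring_nf

/-- Bounded differences inequality, upper tail. -/
lemma expect_upper_tail (hp0 : 0 ≤ p) (hp1 : p ≤ 1) {f : Finset α → ℝ} {K a M : ℝ}
    (hf : ∀ e s, |f (insert e s) - f s| ≤ K) (hK : 0 < K) (hM : 0 < M) (hE : E.card ≤ M)
    (ha : 0 ≤ a) :
    expect E p (fun s => if expect E p f + a ≤ f s then 1 else 0) ≤
      Real.exp (-(a ^ 2 / (4 * K ^ 2 * M))) := by
  set t := a / (2 * K ^ 2 * M) with ht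
  have ht0 : 0 ≤ t := by positivity
  calc expect E p (fun s => if expect E p f + a ≤ f s then 1 else 0)
      ≤ expect E p (fun s => Real.exp (-(t * (expect E p f + a))) * Real.exp (t * f s)) := by
        refine expect_mono hp0 hp1 fun s _ => ?_
        rw [← Real.exp_add]
        split_ifs with h
        · exact Real.one_le_exp (by nlinarith)
        · positivity
    _ = Real.exp (-(t * (expect E p f + a))) * expect E p (fun s => Real.exp (t * f s)) :=
        expect_const_mul _ _
    _ ≤ Real.exp (-(t * (expect E p f + a))) *
          Real.exp (t * expect E p f + t ^ 2 * K ^ 2 * M) := by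
        gcongr
        refine (expect_exp_le hp0 hp1 hf t).trans ?_
        gcongr
    _ = _ := by
        rw [← Real.exp_add, ht]
        congr 1
        field_simp
        ring

/-- Bounded differences inequality, lower tail. -/
lemma expect_lower_tail (hp0 : 0 ≤ p) (hp1 : p ≤ 1) {f : Finset α → ℝ} {K a M : ℝ}
    (hf : ∀ e s, |f (insert e s) - f s| ≤ K) (hK : 0 < K) (hM : 0 < M) (hE : E.card ≤ M)
    (ha : 0 ≤ a) :
    expect E p (fun s => if f s ≤ expect E p f - a then 1 else 0) ≤
      Real.exp (-(a ^ 2 / (4 * K ^ 2 * M))) := by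
  have hneg : expect E p (fun s => -f s) = -expect E p f := by
    simpa using expect_const_mul (E := E) (p := p) (-1) f
  have := expect_upper_tail (E := E) hp0 hp1 (f := fun s => -f s) (K := K)
    (fun e s => by rw [← abs_neg]; simpa [neg_add_eq_sub, sub_eq_add_neg, add_comm] using hf e s)
    hK hM hE ha
  rw [hneg] at this
  refine le_trans (le_of_eq (expect_congr fun s _ => ?_)) this
  congr 1
  exact propext ⟨fun h => by linarith, fun h => by linarith⟩

/-- If many pairwise disjoint sets of bounded size are available, then it is exponentially
unlikely that only few of them are contained in a random subset. -/
lemma expect_few_subset_le (hp0 : 0 ≤ p) (hp1 : p ≤ 1) {F : Finset (Finset α)} {L : ℕ}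
    (hFE : ∀ P ∈ F, P ⊆ E) (hFL : ∀ P ∈ F, P.card ≤ L)
    (hF : (F : Set (Finset α)).PairwiseDisjoint id) (m : ℝ) :
    expect E p (fun t => if ((F.filter (· ⊆ t)).card : ℝ) ≤ m then 1 else 0) ≤
      (2 : ℝ) ^ m * (1 - p ^ L / 2) ^ F.card := by
  have hind : ∀ P ∈ F, DeterminedBy
      (fun t : Finset α => 1 + (-1 / 2) * if P ⊆ t then (1 : ℝ) else 0) (P : Set α) := by
    intro P _ s t hst
    have : P ⊆ s ↔ P ⊆ t :=
      ⟨fun h e he => (hst e he).1 (h he), fun h e he => (hst e he).2 (h he)⟩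
    simp [this]
  have hdisj : (F : Set (Finset α)).PairwiseDisjoint (fun P => (P : Set α)) := by
    intro P hP Q hQ hPQ
    exact Finset.disjoint_coe.2 (hF hP hQ hPQ)
  have hprod : ∀ t : Finset α, ∏ P ∈ F, (1 + (-1 / 2) * if P ⊆ t then (1 : ℝ) else 0) =
      (1 / 2) ^ (F.filter (· ⊆ t)).card := by
    intro t
    rw [← Finset.prod_const, Finset.prod_filter]
    refine Finset.prod_congr rfl fun P _ => ?_
    split_ifs <;> norm_num
  calc expect E p (fun t => if ((F.filter (· ⊆ t)).card : ℝ) ≤ m then 1 else 0)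
      ≤ expect E p (fun t => (2 : ℝ) ^ m *
          ∏ P ∈ F, (1 + (-1 / 2) * if P ⊆ t then (1 : ℝ) else 0)) := by
        refine expect_mono hp0 hp1 fun t _ => ?_
        rw [hprod]
        split_ifs with h
        · rw [one_div, inv_pow, ← div_eq_mul_inv, one_le_div (by positivity),
            ← Real.rpow_natCast]
          exact Real.rpow_le_rpow_of_exponent_le (by norm_num) h
        · positivity
    _ = (2 : ℝ) ^ m * ∏ P ∈ F, (1 + (-1 / 2) * p ^ P.card) := by
        rw [expect_const_mul, expect_prod F hdisj hind]
        congr 1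
        refine Finset.prod_congr rfl fun P hP => ?_
        rw [expect_add, expect_const_mul, expect_subset (hFE P hP), expect_const]
    _ ≤ (2 : ℝ) ^ m * (1 - p ^ L / 2) ^ F.card := by
        gcongr
        rw [← Finset.prod_const]
        refine Finset.prod_le_prod (fun P _ => ?_) fun P hP => ?_
        · have := pow_le_one₀ hp0 hp1 (n := P.card)
          linarith
        · have := pow_le_pow_of_le_one hp0 hp1 (hFL P hP)
          linarith

end Expect

section Girth

lemma isAcyclic_of_edges_subset_list {H G : SimpleGraph V} (hHG : H ≤ G) (l : List (Sym2 V))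
    (hl : ∀ e ∈ H.edgeSet, e ∈ l) (hlen : l.length < G.girth) : H.IsAcyclic := by
  intro a c hc
  have h1 : G.girth ≤ c.length := by
    simpa using SimpleGraph.girth_le_length (hc.mapLe hHG)
  have h2 : c.edges.length ≤ l.length :=
    (List.subperm_of_subset hc.isTrail.edges_nodup
      fun e he => hl e (c.edges_subset_edgeSet he)).length_le
  rw [SimpleGraph.Walk.length_edges] at h2
  omega

lemma walk_eq_of_isChain {G : SimpleGraph V} {u w : V} (p q : G.Walk u w)
    (hp : p.edges.IsChain (· ≠ ·)) (hq : q.edges.IsChain (· ≠ ·))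
    (hlen : p.length + q.length < G.girth) : p = q := by
  set H := SimpleGraph.fromEdgeSet {e | e ∈ p.edges ++ q.edges} with hH
  have hmem : ∀ e, e ∈ p.edges ∨ e ∈ q.edges → e ∈ H.edgeSet := by
    intro e he
    rw [hH, SimpleGraph.edgeSet_fromEdgeSet]
    refine ⟨by simpa using he, fun hd => ?_⟩
    rcases he with he | he
    · exact G.not_isDiag_of_mem_edgeSet (p.edges_subset_edgeSet he) hd
    · exact G.not_isDiag_of_mem_edgeSet (q.edges_subset_edgeSet he) hd
  have hle : H ≤ G := by
    rw [← SimpleGraph.edgeSet_subset_edgeSet, hH, SimpleGraph.edgeSet_fromEdgeSet]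
    rintro e ⟨he, -⟩
    rcases List.mem_append.1 he with he | he
    · exact p.edges_subset_edgeSet he
    · exact q.edges_subset_edgeSet he
  have hac : H.IsAcyclic := by
    refine isAcyclic_of_edges_subset_list hle (p.edges ++ q.edges) ?_ (by simpa using hlen)
    intro e he
    rw [hH, SimpleGraph.edgeSet_fromEdgeSet] at he
    exact he.1
  have hp' : (p.transfer H fun e he => hmem e (Or.inl he)).IsPath := by
    rw [hac.isPath_iff_isChain, SimpleGraph.Walk.edges_transfer]
    exact hp
  have hq' : (q.transfer H fun e he => hmem e (Or.inr he)).IsPath := by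
    rw [hac.isPath_iff_isChain, SimpleGraph.Walk.edges_transfer]
    exact hq
  have := congrArg (fun r : H.Path u w => r.1.support)
    ((hac.subsingleton_path u w).elim ⟨_, hp'⟩ ⟨_, hq'⟩)
  simp only [SimpleGraph.Walk.support_transfer] at this
  exact SimpleGraph.Walk.ext_support this

lemma isPath_of_isChain {G : SimpleGraph V} {u w : V} (p : G.Walk u w)
    (hp : p.edges.IsChain (· ≠ ·)) (hlen : p.length < G.girth) : p.IsPath := by
  set H := SimpleGraph.fromEdgeSet {e | e ∈ p.edges} with hH
  have hmem : ∀ e ∈ p.edges, e ∈ H.edgeSet := by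
    intro e he
    rw [hH, SimpleGraph.edgeSet_fromEdgeSet]
    exact ⟨he, G.not_isDiag_of_mem_edgeSet (p.edges_subset_edgeSet he)⟩
  have hle : H ≤ G := by
    rw [← SimpleGraph.edgeSet_subset_edgeSet, hH, SimpleGraph.edgeSet_fromEdgeSet]
    exact fun e he => p.edges_subset_edgeSet he.1
  have hac : H.IsAcyclic := by
    refine isAcyclic_of_edges_subset_list hle p.edges ?_ (by simpa using hlen)
    intro e he
    rw [hH, SimpleGraph.edgeSet_fromEdgeSet] at he
    exact he.1
  have hp' : (p.transfer H hmem).IsPath := by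
    rw [hac.isPath_iff_isChain, SimpleGraph.Walk.edges_transfer]
    exact hp
  rw [SimpleGraph.Walk.isPath_def] at hp' ⊢
  simpa using hp'

lemma girth_le_card (G : SimpleGraph V) : G.girth ≤ Fintype.card V := by
  by_cases h : G.IsAcyclic
  · simp [SimpleGraph.girth_eq_zero.2 h]
  · obtain ⟨a, w, hw, hlen⟩ := SimpleGraph.exists_girth_eq_length.2 h
    rw [hlen, ← w.length_edges, ← List.length_map (as := w.edges) (f := id)]
    have := hw.support_nodup.length_le_card
    simpa using this

end Girth

/-- Some non-backtracking walk in `H` with `k + 1` edges starts with the dart `(x, y)`. -/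
def Ext (H : SimpleGraph V) : ℕ → V → V → Prop
  | 0, x, y => H.Adj x y
  | k + 1, x, y => H.Adj x y ∧ ∃ z, z ≠ x ∧ Ext H k y z

/-- The edges of `G` on non-backtracking walks with at most `k + 1` edges starting with the
dart `(x, y)`. -/
def branch (G : SimpleGraph V) : ℕ → V → V → Set (Sym2 V)
  | 0, x, y => {s(x, y)}
  | k + 1, x, y => {e | e = s(x, y) ∨ ∃ z, G.Adj y z ∧ z ≠ x ∧ e ∈ branch G k y z}

/-- The spanning subgraph of `G` with edge set `E(G) ∩ s`. -/
def keep (G : SimpleGraph V) (s : Finset (Sym2 V)) : SimpleGraph V where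
  Adj x y := G.Adj x y ∧ s(x, y) ∈ s
  symm := ⟨fun x y h => ⟨h.1.symm, by rw [Sym2.eq_swap]; exact h.2⟩⟩
  loopless := ⟨fun x h => G.loopless.irrefl x h.1⟩

/-- The neighbours of `v` as a finset. -/
def nbr (G : SimpleGraph V) (v : V) : Finset V := Finset.univ.filter (G.Adj v)

/-- The vertices within distance `k` of `v`. -/
def ball (G : SimpleGraph V) : ℕ → V → Finset V
  | 0, v => {v}
  | k + 1, v => (ball G k v).biUnion fun w => insert w (nbr G w)

/-- The number of neighbours `z` of `v` such that `(v, z)` starts a non-backtracking walk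
with `k + 1` edges of `s`. -/
def extCount (G : SimpleGraph V) (k : ℕ) (v : V) (s : Finset (Sym2 V)) : ℕ :=
  ((nbr G v).filter fun z => Ext (keep G s) k v z).card

/-- The sum of `φ` over all extension counts. -/
def stat (G : SimpleGraph V) (k : ℕ) (φ : ℕ → ℝ) (s : Finset (Sym2 V)) : ℝ :=
  ∑ v, φ (extCount G k v s)

section Ext

variable {G H : SimpleGraph V}

@[simp] lemma mem_nbr {v w : V} : w ∈ nbr G v ↔ G.Adj v w := by simp [nbr]

lemma card_nbr (v : V) : (nbr G v).card = (G.neighborSet v).ncard := by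
  rw [← Set.ncard_coe_finset]
  congr 1
  ext w
  simp

lemma Ext.adj {k : ℕ} {x y : V} (h : Ext H k x y) : H.Adj x y := by
  cases k with
  | zero => exact h
  | succ k => exact h.1

lemma Ext.of_succ {k : ℕ} {x y : V} (h : Ext H (k + 1) x y) : Ext H k x y := by
  induction k generalizing x y with
  | zero => exact h.1
  | succ k ih => exact ⟨h.1, h.2.imp fun z hz => ⟨hz.1, ih hz.2⟩⟩

lemma Ext.mono {H' : SimpleGraph V} (hH : H ≤ H') {k : ℕ} {x y : V} (h : Ext H k x y) :
    Ext H' k x y := by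
  induction k generalizing x y with
  | zero => exact hH h
  | succ k ih => exact ⟨hH h.1, h.2.imp fun z hz => ⟨hz.1, ih hz.2⟩⟩

/-- Two distinct extendable darts at `v` can be joined to a walk through `v`. -/
lemma Ext.reverse {k : ℕ} {v z z' : V} (h : H.Adj v z) (hz : z' ≠ z) (h' : Ext H k v z') :
    Ext H k z v :=
  Ext.of_succ ⟨h.symm, z', hz, h'⟩

lemma ext_of_two_le_degree (hH : ∀ v ∈ H.support, 2 ≤ (H.neighborSet v).ncard) (k : ℕ)
    {x y : V} (h : H.Adj x y) : Ext H k x y := by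
  induction k generalizing x y with
  | zero => exact h
  | succ k ih =>
    obtain ⟨z, hz, hzx⟩ := Set.exists_ne_of_one_lt_ncard (hH y ⟨x, h.symm⟩) x
    exact ⟨h, z, hzx, ih hz⟩

lemma ext_of_isPath {x y w : V} (h : H.Adj x y) (p : H.Walk y w)
    (hp : (SimpleGraph.Walk.cons h p).IsPath) (k : ℕ) (hk : k ≤ p.length) : Ext H k x y := by
  induction k generalizing x y with
  | zero => exact h
  | succ k ih =>
    cases p with
    | nil => simp at hk
    | @cons _ z _ h' p =>
      rw [SimpleGraph.Walk.cons_isPath_iff] at hp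
      refine ⟨h, z, ?_, ih h' p hp.1 (by simpa using hk)⟩
      rintro rfl
      exact hp.2 (by simp)

lemma Ext.exists_walk {k : ℕ} {x y : V} (h : Ext H k x y) :
    ∃ (w : V) (p : H.Walk y w), p.length = k ∧
      (SimpleGraph.Walk.cons h.adj p).edges.IsChain (· ≠ ·) := by
  induction k generalizing x y with
  | zero => exact ⟨y, .nil, rfl, by simp⟩
  | succ k ih =>
    obtain ⟨hxy, z, hzx, hz⟩ := h
    obtain ⟨w, p, hp, hc⟩ := ih hz
    refine ⟨w, .cons hz.adj p, by simp [hp], ?_⟩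
    simp only [SimpleGraph.Walk.edges_cons] at hc ⊢
    refine List.isChain_cons_cons.2 ⟨?_, hc⟩
    intro he
    rcases Sym2.eq_iff.1 he with ⟨h1, h2⟩ | ⟨h1, h2⟩
    · exact hz.adj.ne h2
    · exact hzx h1.symm

lemma keep_le (s : Finset (Sym2 V)) : keep G s ≤ G := fun _ _ h => h.1

lemma keep_mono {s t : Finset (Sym2 V)} (h : s ⊆ t) : keep G s ≤ keep G t :=
  fun _ _ hx => ⟨hx.1, h hx.2⟩

lemma mem_edgeFinset' {e : Sym2 V} : e ∈ edgeFinset' G ↔ e ∈ G.edgeSet := by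
  simp [edgeFinset']

lemma keep_eq {s : Finset (Sym2 V)} (hs : s ⊆ edgeFinset' G) :
    SimpleGraph.fromEdgeSet (s : Set (Sym2 V)) = keep G s := by
  ext x y
  simp only [SimpleGraph.fromEdgeSet_adj, Finset.mem_coe, keep]
  exact ⟨fun h => ⟨mem_edgeFinset'.1 (hs h.1), h.1⟩, fun h => ⟨h.2, h.1.ne⟩⟩

lemma determinedBy_ext (k : ℕ) (x y : V) :
    DeterminedBy (fun s => Ext (keep G s) k x y) (branch G k x y) := by
  induction k generalizing x y with
  | zero =>
    intro s t hst
    simp [Ext, keep, hst s(x, y) rfl]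
  | succ k ih =>
    intro s t hst
    have h1 : s(x, y) ∈ s ↔ s(x, y) ∈ t := hst _ (Or.inl rfl)
    simp only [Ext, keep, h1]
    congr 1
    refine propext (exists_congr fun z => and_congr_right fun hz => ?_)
    by_cases hyz : G.Adj y z
    · exact (ih y z s t fun e he => hst e (Or.inr ⟨z, hyz, hz, he⟩)).to_iff
    · exact ⟨fun h => (hyz h.adj.1).elim, fun h => (hyz h.adj.1).elim⟩

lemma exists_walk_of_mem_branch {k : ℕ} {y z : V} (hyz : G.Adj y z) {e : Sym2 V}
    (he : e ∈ branch G k y z) :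
    ∃ (a b : V) (h : G.Adj a b) (p : G.Walk y a), e = s(a, b) ∧ p.length ≤ k ∧
      (p.concat h).edges.IsChain (· ≠ ·) ∧ (p.concat h).edges.head? = some s(y, z) := by
  have hbase : ∀ k, ∃ (a b : V) (h : G.Adj a b) (p : G.Walk y a), s(y, z) = s(a, b) ∧
      p.length ≤ k ∧ (p.concat h).edges.IsChain (· ≠ ·) ∧
      (p.concat h).edges.head? = some s(y, z) :=
    fun k => ⟨y, z, hyz, .nil, rfl, by simp, by simp, by simp⟩
  induction k generalizing y z with
  | zero => exact he ▸ hbase 0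
  | succ k ih =>
    rcases he with rfl | ⟨z', hz', hne, he⟩
    · exact hbase _
    · obtain ⟨a, b, h, p, rfl, hl, hc, hh⟩ := ih hz' he
        (fun k => ⟨z, z', hz', .nil, rfl, by simp, by simp, by simp⟩)
      refine ⟨a, b, h, .cons hyz p, rfl, by simpa using hl, ?_, by simp⟩
      rw [SimpleGraph.Walk.concat_cons, SimpleGraph.Walk.edges_cons, List.isChain_cons]
      refine ⟨?_, hc⟩
      intro f hf
      rw [hh, Option.mem_some_iff] at hf
      subst hf
      intro heq
      rcases Sym2.eq_iff.1 heq with ⟨h1, h2⟩ | ⟨h1, h2⟩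
      · exact hyz.ne h1
      · exact hne h1.symm

lemma disjoint_branch {k : ℕ} (hk : 2 * k + 2 < G.girth) {y z z' : V} (hz : G.Adj y z)
    (hz' : G.Adj y z') (hne : z ≠ z') : Disjoint (branch G k y z) (branch G k y z') := by
  rw [Set.disjoint_left]
  intro e he he'
  obtain ⟨a, b, h, p, rfl, hl, hc, hh⟩ := exists_walk_of_mem_branch hz he
  obtain ⟨a', b', h', p', heq, hl', hc', hh'⟩ := exists_walk_of_mem_branch hz' he'
  have hcontra : s(y, z) ≠ s(y, z') := by
    intro h
    rcases Sym2.eq_iff.1 h with ⟨-, h⟩ | ⟨h, -⟩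
    · exact hne h
    · exact hz'.ne h
  rcases Sym2.eq_iff.1 heq with ⟨rfl, rfl⟩ | ⟨rfl, rfl⟩
  · have := walk_eq_of_isChain _ _ hc hc' (by simp only [SimpleGraph.Walk.length_concat]; omega)
    rw [this, hh'] at hh
    exact hcontra (Option.some.inj hh).symm
  · have hcp : p.edges.IsChain (· ≠ ·) := by
      rw [SimpleGraph.Walk.edges_concat, List.concat_eq_append] at hc
      exact hc.left_of_append
    have := walk_eq_of_isChain _ _ hcp hc'
      (by simp only [SimpleGraph.Walk.length_concat]; omega)
    rw [SimpleGraph.Walk.edges_concat, List.concat_eq_append, List.head?_append, this, hh'] at hh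
    exact hcontra (Option.some.inj hh).symm

lemma ball_mono {k l : ℕ} (h : k ≤ l) (v : V) : ball G k v ⊆ ball G l v := by
  induction l, h using Nat.le_induction with
  | base => exact subset_rfl
  | succ l _ ih =>
    refine ih.trans fun w hw => ?_
    exact Finset.mem_biUnion.2 ⟨w, hw, Finset.mem_insert_self _ _⟩

lemma mem_ball_succ {k : ℕ} {v w x : V} (hw : w ∈ ball G k v) (h : G.Adj w x) :
    x ∈ ball G (k + 1) v :=
  Finset.mem_biUnion.2 ⟨w, hw, Finset.mem_insert_of_mem (mem_nbr.2 h)⟩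

lemma mem_ball_of_walk {u v w : V} {k : ℕ} (hv : v ∈ ball G k u) (p : G.Walk v w) :
    w ∈ ball G (k + p.length) u := by
  induction p generalizing k with
  | nil => simpa using hv
  | cons h p ih =>
    have := ih (mem_ball_succ hv h)
    rwa [SimpleGraph.Walk.length_cons, ← Nat.add_assoc, Nat.add_right_comm]

lemma card_ball_le {d : ℕ} (hd : ∀ v, (G.neighborSet v).ncard ≤ d) (k : ℕ) (v : V) :
    (ball G k v).card ≤ (d + 1) ^ k := by
  induction k with
  | zero => simp [ball]
  | succ k ih =>
    calc (ball G (k + 1) v).card ≤ (ball G k v).card * (d + 1) := by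
          refine Finset.card_biUnion_le_card_mul _ _ _ fun w _ => ?_
          refine (Finset.card_insert_le _ _).trans ?_
          rw [card_nbr]
          exact Nat.add_le_add_right (hd w) 1
      _ ≤ _ := by rw [pow_succ]; gcongr

lemma exists_mem_ball_of_mem_branch {k : ℕ} {x y : V} {e : Sym2 V} (he : e ∈ branch G k x y) :
    ∃ a ∈ e, y ∈ ball G k a := by
  induction k generalizing x y with
  | zero => exact ⟨y, by rw [he]; simp, by simp [ball]⟩
  | succ k ih =>
    rcases he with rfl | ⟨z, hz, -, he⟩
    · exact ⟨y, by simp, ball_mono (Nat.zero_le _) y (by simp [ball])⟩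
    · obtain ⟨a, ha, hza⟩ := ih he
      exact ⟨a, ha, mem_ball_succ hza hz.symm⟩

lemma extCount_insert_eq {k : ℕ} {v : V} {e : Sym2 V}
    (hv : ∀ a ∈ e, v ∉ ball G (k + 1) a) (s : Finset (Sym2 V)) :
    extCount G k v (insert e s) = extCount G k v s := by
  unfold extCount
  congr 1
  refine Finset.filter_congr fun z hz => ?_
  have : e ∉ branch G k v z := by
    intro he
    obtain ⟨a, ha, hza⟩ := exists_mem_ball_of_mem_branch he
    exact hv a ha (mem_ball_succ hza (mem_nbr.1 hz).symm)
  exact ((determinedBy_ext k v z).insert_eq this s).to_iff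

lemma extCount_le {d : ℕ} (hd : ∀ v, (G.neighborSet v).ncard ≤ d) (k : ℕ) (v : V)
    (s : Finset (Sym2 V)) : extCount G k v s ≤ d :=
  (Finset.card_filter_le _ _).trans ((card_nbr v).trans_le (hd v))

lemma abs_stat_insert_sub_le {d : ℕ} (hd : ∀ v, (G.neighborSet v).ncard ≤ d) (k : ℕ)
    {φ : ℕ → ℝ} {M : ℝ} (hφ : ∀ i ≤ d, 0 ≤ φ i ∧ φ i ≤ M) (e : Sym2 V) (s : Finset (Sym2 V)) :
    |stat G k φ (insert e s) - stat G k φ s| ≤ 2 * (d + 1) ^ (k + 1) * M := by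
  induction e with | _ a b
  have hM : 0 ≤ M := (hφ 0 (Nat.zero_le _)).1.trans (hφ 0 (Nat.zero_le _)).2
  set B := ball G (k + 1) a ∪ ball G (k + 1) b with hB
  have hcard : (B.card : ℝ) ≤ 2 * (d + 1) ^ (k + 1) := by
    have := (Finset.card_union_le (ball G (k + 1) a) (ball G (k + 1) b)).trans
      (Nat.add_le_add (card_ball_le hd (k + 1) a) (card_ball_le hd (k + 1) b))
    rw [← two_mul] at this
    exact_mod_cast this
  unfold stat
  rw [← Finset.sum_sub_distrib]
  calc |∑ v, (φ (extCount G k v (insert s(a, b) s)) - φ (extCount G k v s))|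
      ≤ ∑ v, |φ (extCount G k v (insert s(a, b) s)) - φ (extCount G k v s)| :=
        Finset.abs_sum_le_sum_abs _ _
    _ ≤ ∑ v, if v ∈ B then M else 0 := by
        refine Finset.sum_le_sum fun v _ => ?_
        split_ifs with hv
        · have h1 := hφ _ (extCount_le hd k v (insert s(a, b) s))
          have h2 := hφ _ (extCount_le hd k v s)
          rw [abs_le]
          constructor <;> linarith
        · rw [extCount_insert_eq]
          · simp
          · intro c hc hvc
            refine hv ?_
            rcases Sym2.mem_iff.1 hc with rfl | rfl
            · exact Finset.mem_union_left _ hvc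
            · exact Finset.mem_union_right _ hvc
    _ = B.card * M := by simp [Finset.sum_ite_mem]
    _ ≤ _ := by gcongr

end Ext

/-- The probability that a given dart of a `d`-regular tree starts a non-backtracking walk with
`k + 1` edges in bond percolation with parameter `p`. -/
def extProb (p : ℝ) (d : ℕ) : ℕ → ℝ
  | 0 => p
  | k + 1 => p * (1 - (1 - extProb p d k) ^ (d - 1))

/-- The mean of `φ` under the binomial distribution with parameters `m` and `r`. -/
def binomMean : ℕ → ℝ → (ℕ → ℝ) → ℝ
  | 0, _, φ => φ 0
  | m + 1, r, φ => r * binomMean m r (fun j => φ (j + 1)) + (1 - r) * binomMean m r φ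

section BinomMean

lemma binomMean_add (m : ℕ) (r : ℝ) (φ ψ : ℕ → ℝ) :
    binomMean m r (fun j => φ j + ψ j) = binomMean m r φ + binomMean m r ψ := by
  induction m generalizing φ ψ with
  | zero => rfl
  | succ m ih => simp only [binomMean, ih]; ring

lemma binomMean_const (m : ℕ) (r c : ℝ) : binomMean m r (fun _ => c) = c := by
  induction m with
  | zero => rfl
  | succ m ih => simp only [binomMean, ih]; ring

lemma binomMean_natCast (m : ℕ) (r : ℝ) : binomMean m r (fun j => (j : ℝ)) = m * r := by
  induction m with
  | zero => simp [binomMean]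
  | succ m ih =>
    simp only [binomMean, Nat.cast_add, Nat.cast_one, binomMean_add, ih, binomMean_const]
    ring

lemma binomMean_one_le (m : ℕ) (r : ℝ) :
    binomMean m r (fun j => if 1 ≤ j then 1 else 0) = 1 - (1 - r) ^ m := by
  induction m with
  | zero => simp [binomMean]
  | succ m ih =>
    simp only [binomMean, ih, le_add_iff_nonneg_left, zero_le, if_true, binomMean_const]
    ring

lemma binomMean_two_le (m : ℕ) (r : ℝ) :
    binomMean (m + 1) r (fun j => if 2 ≤ j then 1 else 0) =
      1 - (1 - r) ^ (m + 1) - (m + 1) * r * (1 - r) ^ m := by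
  have h : ∀ m, binomMean (m + 1) r (fun j => if 2 ≤ j then 1 else 0) =
      r * (1 - (1 - r) ^ m) + (1 - r) * binomMean m r (fun j => if 2 ≤ j then 1 else 0) := by
    intro m
    rw [← binomMean_one_le]
    simp [binomMean]
  induction m with
  | zero => rw [h]; simp [binomMean]
  | succ m ih => rw [h, ih]; push_cast; ring

lemma binomMean_mul_two_le (m : ℕ) (r : ℝ) :
    binomMean (m + 1) r (fun j => if 2 ≤ j then (j : ℝ) else 0) =
      (m + 1) * r - (m + 1) * r * (1 - r) ^ m := by
  have h : ∀ m, binomMean (m + 1) r (fun j => if 2 ≤ j then (j : ℝ) else 0) =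
      r * (m * r + (1 - (1 - r) ^ m)) +
        (1 - r) * binomMean m r (fun j => if 2 ≤ j then (j : ℝ) else 0) := by
    intro m
    rw [← binomMean_one_le, ← binomMean_natCast, ← binomMean_add]
    simp only [binomMean]
    congr 3
    ext j
    rcases j with _ | j <;> simp
  induction m with
  | zero => rw [h]; simp [binomMean]
  | succ m ih => rw [h, ih]; push_cast; ring

lemma continuous_binomMean (m : ℕ) (φ : ℕ → ℝ) : Continuous fun r => binomMean m r φ := by
  induction m generalizing φ with
  | zero => exact continuous_const
  | succ m ih =>
    simp only [binomMean]
    exact (continuous_id.mul (ih _)).add ((continuous_const.sub continuous_id).mul (ih _))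

lemma expect_card_filter {α ι : Type*} [DecidableEq α] {E : Finset α} {p r : ℝ} (I : Finset ι)
    {A : ι → Set α} {Q : ι → Finset α → Prop} (hA : (I : Set ι).PairwiseDisjoint A)
    (hQ : ∀ i ∈ I, DeterminedBy (Q i) (A i))
    (hr : ∀ i ∈ I, expect E p (fun s => if Q i s then 1 else 0) = r) (φ : ℕ → ℝ) :
    expect E p (fun s => φ (I.filter fun i => Q i s).card) = binomMean I.card r φ := by
  induction I using Finset.induction_on generalizing φ with
  | empty => simp [binomMean]
  | insert i I hi ih =>
    have hA' := hA.subset (Finset.coe_subset.2 (Finset.subset_insert i I))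
    have ih' := ih hA' (fun j hj => hQ j (Finset.mem_insert_of_mem hj))
      (fun j hj => hr j (Finset.mem_insert_of_mem hj))
    have hdet : ∀ ψ : ℕ → ℝ,
        DeterminedBy (fun s => ψ (I.filter fun i => Q i s).card) (⋃ j ∈ I, A j) := by
      intro ψ s t hst
      dsimp only
      congr 2
      refine Finset.filter_congr fun j hj => ?_
      exact (hQ j (Finset.mem_insert_of_mem hj) s t
        fun e he => hst e (Set.mem_biUnion (Finset.mem_coe.2 hj) he)).to_iff
    have hi' : DeterminedBy (fun s => if Q i s then (1 : ℝ) else 0) (A i) :=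
      (hQ i (Finset.mem_insert_self i I)).comp fun P => if P then (1 : ℝ) else 0
    have hdisj : Disjoint (A i) (⋃ j ∈ I, A j) := by
      rw [Set.disjoint_iUnion₂_right]
      intro j hj
      exact hA (by simp) (by simp [hj]) (fun h => hi (h ▸ hj))
    have hexp : ∀ s, φ ((insert i I).filter fun i => Q i s).card =
        (if Q i s then (1 : ℝ) else 0) * φ ((I.filter fun i => Q i s).card + 1) +
        (φ (I.filter fun i => Q i s).card +
          (-1) * ((if Q i s then (1 : ℝ) else 0) * φ (I.filter fun i => Q i s).card)) := by
      intro s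
      rw [Finset.filter_insert]
      split_ifs with h
      · rw [Finset.card_insert_of_notMem (by simp [hi])]
        ring
      · ring
    simp only [hexp, expect_add, expect_const_mul]
    rw [expect_mul hdisj hi' (hdet fun j => φ (j + 1)), expect_mul hdisj hi' (hdet φ),
      hr i (Finset.mem_insert_self i I), ih' φ, ih' fun j => φ (j + 1),
      Finset.card_insert_of_notMem hi, binomMean]
    ring

end BinomMean

section Mean

variable {G : SimpleGraph V} {d : ℕ} {p : ℝ}

lemma expect_ext (hd : ∀ v, (G.neighborSet v).ncard = d) {k : ℕ} (hk : 2 * k + 2 < G.girth)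
    {x y : V} (hxy : G.Adj x y) :
    expect (edgeFinset' G) p (fun s => if Ext (keep G s) k x y then 1 else 0) =
      extProb p d k := by
  induction k generalizing x y with
  | zero =>
    have he : s(x, y) ∈ edgeFinset' G := mem_edgeFinset'.2 (by simpa using hxy)
    simpa [extProb, Ext, keep, hxy] using expect_mem (E := edgeFinset' G) (p := p) he
  | succ k ih =>
    set I := (nbr G y).erase x with hI
    have hadj : ∀ z ∈ I, G.Adj y z := fun z hz => mem_nbr.1 (Finset.mem_of_mem_erase hz)
    have hcard : I.card = d - 1 := by
      rw [hI, Finset.card_erase_of_mem (mem_nbr.2 hxy.symm), card_nbr, hd]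
    have hk' : 2 * k + 2 < G.girth := by omega
    have hexp : ∀ s, (if Ext (keep G s) (k + 1) x y then (1 : ℝ) else 0) =
        (if s(x, y) ∈ s then (1 : ℝ) else 0) *
          (1 + (-1) * ∏ z ∈ I, (1 + (-1) * if Ext (keep G s) k y z then (1 : ℝ) else 0)) := by
      intro s
      by_cases hs : s(x, y) ∈ s
      · by_cases hz : ∃ z ∈ I, Ext (keep G s) k y z
        · obtain ⟨z, hzI, hz⟩ := hz
          rw [Finset.prod_eq_zero hzI (by simp [hz]), if_pos hs,
            if_pos ⟨⟨hxy, hs⟩, z, Finset.ne_of_mem_erase hzI, hz⟩]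
          ring
        · rw [if_neg, Finset.prod_eq_one]
          · ring
          · intro z hzI
            rw [if_neg fun h => hz ⟨z, hzI, h⟩]
            ring
          · rintro ⟨-, z, hzx, h⟩
            exact hz ⟨z, Finset.mem_erase.2 ⟨hzx, mem_nbr.2 h.adj.1⟩, h⟩
      · rw [if_neg hs, if_neg fun h => hs h.1.2]
        ring
    have hdet : ∀ z ∈ I, DeterminedBy
        (fun s => 1 + (-1) * if Ext (keep G s) k y z then (1 : ℝ) else 0) (branch G k y z) :=
      fun z _ => (determinedBy_ext k y z).comp fun P => 1 + (-1) * if P then (1 : ℝ) else 0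
    have hdisj : (I : Set V).PairwiseDisjoint (fun z => branch G k y z) :=
      fun z hz z' hz' hne => disjoint_branch hk' (hadj z hz) (hadj z' hz') hne
    have hroot : Disjoint {s(x, y)} (⋃ z ∈ I, branch G k y z) := by
      rw [Set.disjoint_singleton_left]
      simp only [Set.mem_iUnion, not_exists]
      intro z hz hmem
      refine Set.disjoint_left.1 (disjoint_branch hk' (hadj z hz) hxy.symm
        (Finset.ne_of_mem_erase hz)) hmem ?_
      rw [Sym2.eq_swap]
      cases k with
      | zero => rfl
      | succ k => exact Or.inl rfl
    have he : s(x, y) ∈ edgeFinset' G := mem_edgeFinset'.2 (by simpa using hxy)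
    simp only [hexp]
    rw [expect_mul hroot (determinedBy_mem _)
      ((DeterminedBy.prod I hdet).comp fun a => 1 + (-1) * a), expect_add, expect_const_mul,
      expect_prod I hdisj hdet, expect_mem he, expect_const, extProb,
      ← hcard, ← Finset.prod_const, Finset.prod_congr rfl fun z hz => ?_]
    · ring
    · rw [expect_add, expect_const_mul, ih hk' (hadj z hz), expect_const]
      ring

lemma expect_stat (hd : ∀ v, (G.neighborSet v).ncard = d) {k : ℕ} (hk : 2 * k + 2 < G.girth)
    (φ : ℕ → ℝ) :
    expect (edgeFinset' G) p (stat G k φ) =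
      Fintype.card V * binomMean d (extProb p d k) φ := by
  change expect (edgeFinset' G) p (fun s => ∑ v, φ (extCount G k v s)) = _
  rw [expect_sum, Finset.sum_congr rfl fun v _ => ?_, Finset.sum_const, nsmul_eq_mul,
    Finset.card_univ]
  have := expect_card_filter (E := edgeFinset' G) (p := p) (r := extProb p d k) (nbr G v)
    (A := fun z => branch G k v z) (Q := fun z s => Ext (keep G s) k v z)
    (fun z hz z' hz' hne => disjoint_branch hk (mem_nbr.1 hz) (mem_nbr.1 hz') hne)
    (fun z _ => determinedBy_ext k v z) (fun z hz => expect_ext hd hk (mem_nbr.1 hz)) φ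
  rwa [card_nbr, hd] at this

lemma card_edgeFinset'_le (hd : ∀ v, (G.neighborSet v).ncard ≤ d) :
    (edgeFinset' G).card ≤ d * Fintype.card V := by
  have hsub : edgeFinset' G ⊆ Finset.univ.biUnion fun v => (nbr G v).image fun w => s(v, w) := by
    intro e he
    induction e with | _ a b
    refine Finset.mem_biUnion.2 ⟨a, Finset.mem_univ _, Finset.mem_image.2 ⟨b, ?_, rfl⟩⟩
    exact mem_nbr.2 (mem_edgeFinset'.1 he)
  refine (Finset.card_le_card hsub).trans ?_
  refine (Finset.card_biUnion_le_card_mul _ _ d fun v _ => ?_).trans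
    (by rw [Finset.card_univ, mul_comm])
  exact Finset.card_image_le.trans ((card_nbr v).trans_le (hd v))

/-- The rate in the concentration inequality for `stat`. -/
def statRate (d k : ℕ) (η : ℝ) : ℝ := η ^ 2 / (4 * (2 * (d + 1) ^ (k + 1) * d) ^ 2 * d)

lemma statRate_pos (hd : 0 < d) (k : ℕ) {η : ℝ} (hη : 0 < η) : 0 < statRate d k η := by
  have : (0 : ℝ) < d := by exact_mod_cast hd
  unfold statRate
  positivity

lemma stat_tails (hp0 : 0 ≤ p) (hp1 : p ≤ 1) (hd0 : 0 < d) [Nonempty V]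
    (hd : ∀ v, (G.neighborSet v).ncard = d) {k : ℕ} (hk : 2 * k + 2 < G.girth)
    {φ : ℕ → ℝ} (hφ : ∀ i ≤ d, 0 ≤ φ i ∧ φ i ≤ d) {η : ℝ} (hη : 0 < η) :
    expect (edgeFinset' G) p (fun s =>
        if Fintype.card V * (binomMean d (extProb p d k) φ + η) ≤ stat G k φ s then 1 else 0) ≤
      Real.exp (-statRate d k η * Fintype.card V) ∧
    expect (edgeFinset' G) p (fun s =>
        if stat G k φ s ≤ Fintype.card V * (binomMean d (extProb p d k) φ - η) then 1 else 0) ≤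
      Real.exp (-statRate d k η * Fintype.card V) := by
  have hd' : (0 : ℝ) < d := by exact_mod_cast hd0
  have hn : (0 : ℝ) < Fintype.card V := by exact_mod_cast Fintype.card_pos
  have hK : (0 : ℝ) < 2 * (d + 1) ^ (k + 1) * d := by positivity
  have hM : (0 : ℝ) < d * Fintype.card V := by positivity
  have hE : ((edgeFinset' G).card : ℝ) ≤ d * Fintype.card V := by
    exact_mod_cast card_edgeFinset'_le fun v => (hd v).le
  have hlip := fun e s => abs_stat_insert_sub_le (G := G) (fun v => (hd v).le) k hφ e s
  have hexp : -((η * Fintype.card V) ^ 2 /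
      (4 * (2 * (d + 1) ^ (k + 1) * d : ℝ) ^ 2 * (d * Fintype.card V))) =
      -statRate d k η * Fintype.card V := by
    unfold statRate
    field_simp
  have h1 := expect_upper_tail (E := edgeFinset' G) hp0 hp1 hlip hK hM hE
    (a := η * Fintype.card V) (by positivity)
  have h2 := expect_lower_tail (E := edgeFinset' G) hp0 hp1 hlip hK hM hE
    (a := η * Fintype.card V) (by positivity)
  rw [hexp, expect_stat hd hk] at h1 h2
  rw [show (Fintype.card V : ℝ) * (binomMean d (extProb p d k) φ + η) =
      Fintype.card V * binomMean d (extProb p d k) φ + η * Fintype.card V by ring,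
    show (Fintype.card V : ℝ) * (binomMean d (extProb p d k) φ - η) =
      Fintype.card V * binomMean d (extProb p d k) φ - η * Fintype.card V by ring]
  exact ⟨h1, h2⟩

end Mean

section Limit

variable {p q : ℝ} {d : ℕ}

lemma one_sub_pow_eq_mul_geom_sum (x : ℝ) (m : ℕ) :
    1 - (1 - x) ^ m = x * ∑ i ∈ Finset.range m, (1 - x) ^ i := by
  have := geom_sum_mul_neg (1 - x) m
  rw [← this]
  ring

lemma geom_sum_lt {m : ℕ} (hm : 2 ≤ m) {x y : ℝ} (hxy : x < y) (hy : y ≤ 1) :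
    ∑ i ∈ Finset.range m, (1 - y) ^ i < ∑ i ∈ Finset.range m, (1 - x) ^ i := by
  refine Finset.sum_lt_sum (fun i _ => ?_) ⟨1, Finset.mem_range.2 (by omega), ?_⟩
  · exact pow_le_pow_left₀ (by linarith) (by linarith) i
  · simpa using hxy

lemma one_sub_pow_mono {m : ℕ} {x y : ℝ} (hxy : x ≤ y) (hy : y ≤ 1) :
    1 - (1 - x) ^ m ≤ 1 - (1 - y) ^ m :=
  sub_le_sub_left (pow_le_pow_left₀ (by linarith) (by linarith) m) 1

lemma extProb_mem (hp0 : 0 ≤ p) (hp1 : p ≤ 1) (d k : ℕ) :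
    0 ≤ extProb p d k ∧ extProb p d k ≤ p := by
  induction k with
  | zero => exact ⟨hp0, le_rfl⟩
  | succ k ih =>
    have h0 : 0 ≤ 1 - extProb p d k := by linarith
    have h1 : (1 - extProb p d k) ^ (d - 1) ≤ 1 := pow_le_one₀ h0 (by linarith)
    have h2 : 0 ≤ (1 - extProb p d k) ^ (d - 1) := pow_nonneg h0 _
    rw [extProb]
    exact ⟨mul_nonneg hp0 (by linarith), mul_le_of_le_one_right hp0 (by linarith)⟩

lemma le_extProb (hp0 : 0 ≤ p) (hp1 : p ≤ 1) {x : ℝ} (hxp : x ≤ p)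
    (hx : x ≤ p * (1 - (1 - x) ^ (d - 1))) (k : ℕ) : x ≤ extProb p d k := by
  induction k with
  | zero => exact hxp
  | succ k ih =>
    have := (extProb_mem hp0 hp1 d k).2
    exact hx.trans (mul_le_mul_of_nonneg_left (one_sub_pow_mono ih (by linarith)) hp0)

lemma extProb_mono {p₁ : ℝ} (hp₁ : 0 ≤ p₁) (h : p₁ ≤ p) (hp1 : p ≤ 1) (k : ℕ) :
    extProb p₁ d k ≤ extProb p d k := by
  induction k with
  | zero => exact h
  | succ k ih =>
    have h1 := (extProb_mem (hp₁.trans h) hp1 d k).2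
    have h2 := extProb_mem hp₁ (h.trans hp1) d k
    have h3 : (1 - extProb p₁ d k) ^ (d - 1) ≤ 1 :=
      pow_le_one₀ (by linarith) (by linarith)
    exact mul_le_mul h (one_sub_pow_mono ih (by linarith)) (by linarith) (hp₁.trans h)

lemma extProb_succ_le (hp0 : 0 ≤ p) (hp1 : p ≤ 1) (k : ℕ) :
    extProb p d (k + 1) ≤ extProb p d k := by
  induction k with
  | zero => exact (extProb_mem hp0 hp1 d 1).2
  | succ k ih =>
    have := (extProb_mem hp0 hp1 d k).2
    exact mul_le_mul_of_nonneg_left (one_sub_pow_mono ih (by linarith)) hp0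

lemma exists_extProb_close (hd : 3 ≤ d) (hp0 : 0 < p) (hp1 : p < 1) (hq0 : 0 ≤ q) (hq1 : q < 1)
    (hq : q = (1 - p + p * q) ^ (d - 1)) {η : ℝ} (hη : 0 < η) :
    ∃ p₁, 0 < p₁ ∧ p₁ < p ∧ ∃ k₀, ∀ k ≥ k₀,
      |extProb p d k - p * (1 - q)| < η ∧ |extProb p₁ d k - p * (1 - q)| < η := by
  set r := p * (1 - q) with hr
  have hr0 : 0 < r := mul_pos hp0 (by linarith)
  have hrp : r ≤ p := mul_le_of_le_one_right hp0.le (by linarith)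
  have hfix : p * (1 - (1 - r) ^ (d - 1)) = r := by
    rw [show 1 - r = 1 - p + p * q by rw [hr]; ring, ← hq]
  have hgeom : p * ∑ i ∈ Finset.range (d - 1), (1 - r) ^ i = 1 := by
    rw [one_sub_pow_eq_mul_geom_sum] at hfix
    have : r * (p * ∑ i ∈ Finset.range (d - 1), (1 - r) ^ i) = r * 1 := by linarith
    exact mul_left_cancel₀ hr0.ne' this
  have hlim : Filter.Tendsto (extProb p d) Filter.atTop (nhds r) := by
    have hbdd : BddBelow (Set.range (extProb p d)) :=
      ⟨0, by rintro _ ⟨k, rfl⟩; exact (extProb_mem hp0.le hp1.le d k).1⟩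
    have hanti : Antitone (extProb p d) :=
      antitone_nat_of_succ_le fun k => extProb_succ_le hp0.le hp1.le k
    have ht := tendsto_atTop_ciInf hanti hbdd
    set l := ⨅ k, extProb p d k with hl
    have hrl : r ≤ l := le_ciInf fun k => le_extProb hp0.le hp1.le hrp hfix.ge k
    have hlp : l ≤ p := ciInf_le hbdd 0
    have ht' : Filter.Tendsto (fun k => extProb p d (k + 1)) Filter.atTop
        (nhds (p * (1 - (1 - l) ^ (d - 1)))) :=
      (((tendsto_const_nhds.sub ht).pow (d - 1)).const_sub 1).const_mul p
    have heq := tendsto_nhds_unique ((Filter.tendsto_add_atTop_iff_nat 1).2 ht) ht'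
    rcases hrl.eq_or_lt with h | h
    · rwa [← h] at ht
    · exfalso
      have hlt := mul_lt_mul_of_pos_left
        (geom_sum_lt (m := d - 1) (by omega) h (by linarith)) hp0
      rw [hgeom] at hlt
      rw [one_sub_pow_eq_mul_geom_sum] at heq
      have hl0 : 0 < l := hr0.trans h
      nlinarith
  obtain ⟨x, hx1, hx2⟩ : ∃ x, max 0 (r - η) < x ∧ x < r :=
    exists_between (max_lt hr0 (by linarith))
  have hx0 : 0 < x := (le_max_left _ _).trans_lt hx1
  have hxη : r - η < x := (le_max_right _ _).trans_lt hx1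
  set g := ∑ i ∈ Finset.range (d - 1), (1 - x) ^ i with hg
  have hgt := mul_lt_mul_of_pos_left (geom_sum_lt (m := d - 1) (by omega) hx2 (by linarith)) hp0
  rw [hgeom, ← hg] at hgt
  have hg0 : 0 < g := by
    by_contra h
    nlinarith
  refine ⟨max x (1 / g), lt_max_of_lt_left hx0, max_lt (by linarith) ?_, ?_⟩
  · rw [div_lt_iff₀ hg0]
    linarith
  obtain ⟨k₀, hk₀⟩ := Filter.eventually_atTop.1
    (hlim.eventually (gt_mem_nhds (show r < r + η by linarith)))
  set p₁ := max x (1 / g) with hp₁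
  have hp₁0 : 0 < p₁ := lt_max_of_lt_left hx0
  have hp₁p : p₁ ≤ p := max_le (by linarith) (by rw [div_le_iff₀ hg0]; linarith)
  refine ⟨k₀, fun k hk => ?_⟩
  have h1 := hk₀ k hk
  have h2 := le_extProb (d := d) hp0.le hp1.le hrp hfix.ge k
  have h3 := extProb_mono (d := d) hp₁0.le hp₁p hp1.le k
  have h4 : x ≤ extProb p₁ d k := by
    refine le_extProb hp₁0.le (hp₁p.trans hp1.le) (le_max_left _ _) ?_ k
    rw [one_sub_pow_eq_mul_geom_sum, ← hg]
    have : 1 ≤ p₁ * g := by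
      rw [← div_le_iff₀ hg0]
      exact le_max_right _ _
    nlinarith
  rw [abs_lt, abs_lt]
  refine ⟨⟨?_, ?_⟩, ?_, ?_⟩ <;> linarith

end Limit

section Core

variable {G H K : SimpleGraph V} {c : H.ConnectedComponent}

lemma twoCoreComp_le : twoCoreComp H c ≤ H := sSup_le fun _ hK => hK.1

lemma two_le_ncard_twoCoreComp {v : V} (hv : v ∈ (twoCoreComp H c).support) :
    2 ≤ ((twoCoreComp H c).neighborSet v).ncard := by
  obtain ⟨w, hw⟩ := hv
  obtain ⟨K, hK, hKw⟩ := SimpleGraph.sSup_adj.1 hw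
  refine (hK.2.2 v ⟨w, hKw⟩).trans (Set.ncard_le_ncard (fun x hx => ?_) (Set.toFinite _))
  exact SimpleGraph.sSup_adj.2 ⟨K, hK, hx⟩

lemma le_twoCoreComp (hKH : K ≤ H) (hc : ∀ v ∈ K.support, H.connectedComponentMk v = c)
    (hdeg : ∀ v ∈ K.support, 2 ≤ (K.neighborSet v).ncard) : K ≤ twoCoreComp H c :=
  le_sSup ⟨hKH, hc, hdeg⟩

lemma sum_ncard_neighborSet (K : SimpleGraph V) :
    ∑ v, (K.neighborSet v).ncard = 2 * K.edgeSet.ncard := by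
  have h := K.sum_degrees_eq_twice_card_edges
  rw [← SimpleGraph.coe_edgeFinset, Set.ncard_coe_finset, ← h]
  refine Finset.sum_congr rfl fun v _ => ?_
  rw [← SimpleGraph.card_neighborFinset_eq_degree, ← Set.ncard_coe_finset,
    SimpleGraph.coe_neighborFinset]

lemma ncard_support_eq_sum (K : SimpleGraph V) :
    (K.support.ncard : ℝ) = ∑ v, if v ∈ K.support then 1 else 0 := by
  rw [Finset.sum_boole, ← Set.ncard_coe_finset]
  simp

lemma ncard_neighborSet_le_extCount {s : Finset (Sym2 V)} (hK : K ≤ keep G s)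
    (hdeg : ∀ v ∈ K.support, 2 ≤ (K.neighborSet v).ncard) (k : ℕ) (v : V) :
    (K.neighborSet v).ncard ≤ extCount G k v s := by
  rw [extCount, ← Set.ncard_coe_finset]
  refine Set.ncard_le_ncard (fun z hz => ?_) (Set.toFinite _)
  have hz' : Ext (keep G s) k v z := (ext_of_two_le_degree hdeg k hz).mono hK
  exact Finset.mem_coe.2 (Finset.mem_filter.2 ⟨mem_nbr.2 (hK hz).1, hz'⟩)

lemma ncard_support_le_stat {s : Finset (Sym2 V)} (hK : K ≤ keep G s)
    (hdeg : ∀ v ∈ K.support, 2 ≤ (K.neighborSet v).ncard) (k : ℕ) :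
    (K.support.ncard : ℝ) ≤ stat G k (fun j => if 2 ≤ j then 1 else 0) s := by
  rw [ncard_support_eq_sum, stat]
  refine Finset.sum_le_sum fun v _ => ?_
  by_cases hv : v ∈ K.support
  · rw [if_pos hv, if_pos ((hdeg v hv).trans (ncard_neighborSet_le_extCount hK hdeg k v))]
  · rw [if_neg hv]
    split_ifs <;> norm_num

lemma two_mul_ncard_edgeSet_le_stat {s : Finset (Sym2 V)} (hK : K ≤ keep G s)
    (hdeg : ∀ v ∈ K.support, 2 ≤ (K.neighborSet v).ncard) (k : ℕ) :
    2 * (K.edgeSet.ncard : ℝ) ≤ stat G k (fun j => if 2 ≤ j then (j : ℝ) else 0) s := by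
  have h : (2 : ℝ) * K.edgeSet.ncard = ∑ v, ((K.neighborSet v).ncard : ℝ) := by
    exact_mod_cast (sum_ncard_neighborSet K).symm
  rw [h, stat]
  refine Finset.sum_le_sum fun v _ => ?_
  have hle := ncard_neighborSet_le_extCount hK hdeg k v
  by_cases hv : v ∈ K.support
  · rw [if_pos ((hdeg v hv).trans hle)]
    exact_mod_cast hle
  · have : K.neighborSet v = ∅ := Set.eq_empty_of_forall_notMem fun z hz => hv ⟨z, hz⟩
    rw [this, Set.ncard_empty]
    split_ifs <;> simp

section Lower

variable {s : Finset (Sym2 V)} {k : ℕ} {B : Finset V}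

lemma stat_le_ncard_support_add
    (hB : ∀ v ∉ B, 2 ≤ extCount G k v s → ∀ z, Ext (keep G s) k v z → K.Adj v z) :
    stat G k (fun j => if 2 ≤ j then 1 else 0) s ≤ K.support.ncard + B.card := by
  have hBsum : (B.card : ℝ) = ∑ v, if v ∈ B then 1 else 0 := by simp
  rw [ncard_support_eq_sum, hBsum, ← Finset.sum_add_distrib, stat]
  refine Finset.sum_le_sum fun v _ => ?_
  by_cases hv : v ∈ B
  · rw [if_pos hv]
    split_ifs <;> norm_num
  · rw [if_neg hv, add_zero]
    by_cases h2 : 2 ≤ extCount G k v s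
    · obtain ⟨z, hz⟩ := Finset.card_pos.1 (zero_lt_two.trans_le h2)
      rw [if_pos h2, if_pos ⟨z, hB v hv h2 z (Finset.mem_filter.1 hz).2⟩]
    · rw [if_neg h2]
      split_ifs <;> norm_num

lemma stat_le_two_mul_ncard_edgeSet_add {d : ℕ} (hd : ∀ v, (G.neighborSet v).ncard ≤ d)
    (hB : ∀ v ∉ B, 2 ≤ extCount G k v s → ∀ z, Ext (keep G s) k v z → K.Adj v z) :
    stat G k (fun j => if 2 ≤ j then (j : ℝ) else 0) s ≤
      2 * K.edgeSet.ncard + d * B.card := by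
  have h : (2 : ℝ) * K.edgeSet.ncard = ∑ v, ((K.neighborSet v).ncard : ℝ) := by
    exact_mod_cast (sum_ncard_neighborSet K).symm
  have hBsum : (d * B.card : ℝ) = ∑ v, if v ∈ B then (d : ℝ) else 0 := by simp [mul_comm]
  rw [h, hBsum, ← Finset.sum_add_distrib, stat]
  refine Finset.sum_le_sum fun v _ => ?_
  by_cases h2 : 2 ≤ extCount G k v s
  · rw [if_pos h2]
    by_cases hv : v ∈ B
    · rw [if_pos hv]
      have : (extCount G k v s : ℝ) ≤ d := by exact_mod_cast extCount_le hd k v s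
      have : (0 : ℝ) ≤ (K.neighborSet v).ncard := by positivity
      linarith
    · rw [if_neg hv, add_zero, extCount, ← Set.ncard_coe_finset]
      exact_mod_cast Set.ncard_le_ncard
        (fun z hz => hB v hv h2 z (Finset.mem_filter.1 (Finset.mem_coe.1 hz)).2) (Set.toFinite _)
  · rw [if_neg h2]
    have : (0 : ℝ) ≤ (K.neighborSet v).ncard := by positivity
    split_ifs <;> positivity

end Lower

/-- An edge of `c` which is not a bridge belongs to the 2-core. -/
lemma twoCoreComp_adj_of_not_isBridge {v z : V} (h : H.Adj v z)
    (hv : H.connectedComponentMk v = c) (hb : ¬ H.IsBridge s(v, z)) :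
    (twoCoreComp H c).Adj v z := by
  rw [SimpleGraph.isBridge_iff_forall_cycle_notMem (by simpa using h)] at hb
  push Not at hb
  obtain ⟨u, p, hp, hmem⟩ := hb
  set K := p.toSubgraph.spanningCoe with hK
  have hadj : K.Adj v z := by
    rw [hK, SimpleGraph.Subgraph.spanningCoe_adj]
    rw [← SimpleGraph.Subgraph.mem_edgeSet]
    exact (SimpleGraph.Walk.mem_edges_toSubgraph p).2 hmem
  have hsupp : ∀ w ∈ K.support, w ∈ p.support := by
    rintro w ⟨x, hx⟩
    exact (SimpleGraph.Walk.mem_verts_toSubgraph p).1 (p.toSubgraph.edge_vert hx)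
  refine le_twoCoreComp (K := K) (SimpleGraph.Subgraph.spanningCoe_le _) (fun w hw => ?_)
    (fun w hw => ?_) hadj
  · have h1 : ∀ w ∈ K.support, H.Reachable u w := fun w hw =>
      ⟨p.takeUntil w (hsupp w hw)⟩
    rw [← hv]
    exact SimpleGraph.ConnectedComponent.eq.2 ((h1 w hw).symm.trans (h1 v ⟨z, hadj⟩))
  · have := hp.ncard_neighborSet_toSubgraph_eq_two (hsupp w hw)
    exact this.ge

end Core

/-- The edges of `G` joining `S` to its complement. -/
def cutEdges (G : SimpleGraph V) (S : Finset V) : Finset (Sym2 V) :=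
  (edgeFinset' G).filter (fun e => ∃ x ∈ S, ∃ y, y ∉ S ∧ e = s(x, y))

section Cut

variable {G : SimpleGraph V} {b : ℝ} {d : ℕ}

lemma mem_cutEdges {S : Finset V} {e : Sym2 V} :
    e ∈ cutEdges G S ↔ ∃ x y, G.Adj x y ∧ x ∈ S ∧ y ∉ S ∧ e = s(x, y) := by
  simp only [cutEdges, Finset.mem_filter, mem_edgeFinset']
  constructor
  · rintro ⟨he, x, hx, y, hy, rfl⟩
    exact ⟨x, y, he, hx, hy, rfl⟩
  · rintro ⟨x, y, h, hx, hy, rfl⟩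
    exact ⟨h, x, hx, y, hy, rfl⟩

lemma cutEdges_compl (S : Finset V) : cutEdges G Sᶜ = cutEdges G S := by
  ext e
  simp only [mem_cutEdges, Finset.mem_compl, not_not]
  constructor <;>
  · rintro ⟨x, y, h, hx, hy, rfl⟩
    exact ⟨y, x, h.symm, hy, hx, Sym2.eq_swap⟩

lemma mem_iff_of_notMem_cutEdges {S : Finset V} {x y : V} (h : G.Adj x y)
    (hS : s(x, y) ∉ cutEdges G S) : x ∈ S ↔ y ∈ S := by
  by_contra hne
  rw [mem_cutEdges] at hS
  by_cases hx : x ∈ S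
  · exact hS ⟨x, y, h, hx, fun hy => hne ⟨fun _ => hy, fun _ => hx⟩, rfl⟩
  · exact hS ⟨y, x, h.symm, by tauto, hx, Sym2.eq_swap⟩

lemma IsExpander.le_cutCard (hG : IsExpander G b d) (hb : 0 ≤ b) {S : Finset V} {m : ℝ}
    (hS : m ≤ S.card) (hS' : m ≤ Sᶜ.card) : b * m ≤ (cutEdges G S).card := by
  have hsum : (S.card : ℝ) + Sᶜ.card = Fintype.card V := by
    exact_mod_cast Finset.card_add_card_compl S
  rcases le_total (S.card : ℝ) (Fintype.card V / 2) with h | h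
  · exact (mul_le_mul_of_nonneg_left hS hb).trans (hG.2 S h)
  · rw [← cutEdges_compl]
    exact (mul_le_mul_of_nonneg_left hS' hb).trans (hG.2 Sᶜ (by linarith))

lemma card_le_of_forall_exists_mem (hd : ∀ v, (G.neighborSet v).ncard ≤ d) {F : Finset (Sym2 V)}
    (hF : F ⊆ edgeFinset' G) {D : Finset V} (h : ∀ e ∈ F, ∃ v ∈ D, v ∈ e) :
    F.card ≤ d * D.card := by
  have hsub : F ⊆ D.biUnion fun v => (nbr G v).image fun w => s(v, w) := by
    intro e he
    obtain ⟨v, hv, w, rfl⟩ := h e he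
    exact Finset.mem_biUnion.2 ⟨v, hv, Finset.mem_image.2
      ⟨w, mem_nbr.2 (mem_edgeFinset'.1 (hF he)), rfl⟩⟩
  refine (Finset.card_le_card hsub).trans ?_
  refine (Finset.card_biUnion_le_card_mul _ _ d fun v _ => ?_).trans_eq (mul_comm _ _)
  exact Finset.card_image_le.trans ((card_nbr v).trans_le (hd v))

/-- In an expander, two disjoint linear-sized sets are separated only by cuts meeting every
member of a linear-sized disjoint family of edge sets of bounded size. -/
lemma exists_disjoint_crossing [Nonempty V] (hG : IsExpander G b d) (hb : 0 < b) {a : ℝ}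
    (ha : 0 < a) {L : ℕ} (hL : 2 * d < L * (b * a)) {A₀ B₀ : Finset V} (hAB : Disjoint A₀ B₀)
    (hA : a * Fintype.card V ≤ A₀.card) (hB : a * Fintype.card V ≤ B₀.card) :
    ∃ F : Finset (Finset (Sym2 V)),
      (∀ P ∈ F, P ⊆ edgeFinset' G ∧ P.card ≤ L ∧
        ∀ A, A₀ ⊆ A → Disjoint A B₀ → ∃ e ∈ P, e ∈ cutEdges G A) ∧
      (F : Set (Finset (Sym2 V))).PairwiseDisjoint id ∧
      b * a / (2 * L) * Fintype.card V ≤ F.card := by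
  have hn : (0 : ℝ) < Fintype.card V := by exact_mod_cast Fintype.card_pos
  set good : Finset (Sym2 V) → Prop := fun P => P ⊆ edgeFinset' G ∧ P.card ≤ L ∧
    ∀ A, A₀ ⊆ A → Disjoint A B₀ → ∃ e ∈ P, e ∈ cutEdges G A with hgood
  obtain ⟨F, hFmem, hFmax⟩ := Finset.exists_max_image
    (Finset.univ.filter fun F : Finset (Finset (Sym2 V)) =>
      (∀ P ∈ F, good P) ∧ (F : Set (Finset (Sym2 V))).PairwiseDisjoint id) Finset.card
    ⟨∅, by simp⟩
  rw [Finset.mem_filter] at hFmem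
  obtain ⟨-, hF, hdisj⟩ := hFmem
  refine ⟨F, hF, hdisj, ?_⟩
  by_contra! hlt
  have hL0 : (0 : ℝ) < L := by
    by_contra h
    have : (0 : ℝ) < b * a := mul_pos hb ha
    have : (0 : ℝ) ≤ d := by positivity
    nlinarith
  set U := F.biUnion id with hU
  have hUcard : (U.card : ℝ) ≤ b * a * Fintype.card V / 2 := by
    have h1 : (U.card : ℝ) ≤ F.card * L := by
      exact_mod_cast Finset.card_biUnion_le_card_mul F id L fun P hP => (hF P hP).2.1
    have h2 : (F.card : ℝ) * L ≤ b * a / (2 * L) * Fintype.card V * L :=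
      mul_le_mul_of_nonneg_right hlt.le hL0.le
    have h3 : b * a / (2 * L) * Fintype.card V * L = b * a * Fintype.card V / 2 := by
      field_simp
    linarith
  set T : ℕ → Finset V := fun i => Finset.univ.filter fun v =>
    ∃ P ⊆ edgeFinset' G \ U, P.card ≤ i ∧
      ∀ A, A₀ ⊆ A → (∀ e ∈ P, e ∉ cutEdges G A) → v ∈ A with hT
  have hTB : ∀ i ≤ L, Disjoint (T i) B₀ := by
    intro i hi
    rw [Finset.disjoint_left]
    intro v hv hvB
    obtain ⟨P, hPE, hPi, hP⟩ := (Finset.mem_filter.1 hv).2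
    have hPgood : good P := by
      refine ⟨hPE.trans Finset.sdiff_subset, hPi.trans hi, fun A hA hAB => ?_⟩
      by_contra! h
      exact Finset.disjoint_left.1 hAB (hP A hA h) hvB
    have hPdisj : ∀ Q ∈ F, Disjoint P Q := fun Q hQ =>
      Finset.disjoint_left.2 fun e he heQ =>
        (Finset.mem_sdiff.1 (hPE he)).2 (Finset.mem_biUnion.2 ⟨Q, hQ, heQ⟩)
    have hPF : P ∉ F := by
      intro h
      obtain ⟨e, he, -⟩ := hPgood.2.2 A₀ subset_rfl hAB
      exact Finset.disjoint_left.1 (hPdisj P h) he he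
    have := hFmax (insert P F) (by
      rw [Finset.mem_filter]
      refine ⟨Finset.mem_univ _, ?_, ?_⟩
      · simpa using ⟨hPgood, hF⟩
      · rw [Finset.coe_insert]
        exact hdisj.insert fun Q hQ _ => hPdisj Q hQ)
    rw [Finset.card_insert_of_notMem hPF] at this
    omega
  have hTA : ∀ i, A₀ ⊆ T i := fun i v hv =>
    Finset.mem_filter.2 ⟨Finset.mem_univ _, ∅, by simp, by simp, fun A hA _ => hA hv⟩
  have hTmono : ∀ i, T i ⊆ T (i + 1) := by
    intro i v hv
    obtain ⟨P, hPE, hPi, hP⟩ := (Finset.mem_filter.1 hv).2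
    exact Finset.mem_filter.2 ⟨Finset.mem_univ _, P, hPE, by omega, hP⟩
  have hgrow : ∀ i ≤ L, b * a * Fintype.card V / 2 ≤ d * ((T (i + 1)).card - (T i).card) := by
    intro i hi
    have hcut : b * (a * Fintype.card V) ≤ (cutEdges G (T i)).card := by
      refine hG.le_cutCard hb.le ?_ ?_
      · exact hA.trans (by exact_mod_cast Finset.card_le_card (hTA i))
      · have hsub : B₀ ⊆ (T i)ᶜ := fun v hv =>
          Finset.mem_compl.2 fun h => Finset.disjoint_left.1 (hTB i hi) h hv
        exact hB.trans (by exact_mod_cast Finset.card_le_card hsub)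
    have hinc : (cutEdges G (T i) \ U).card ≤ d * (T (i + 1) \ T i).card := by
      refine card_le_of_forall_exists_mem hG.1
        (Finset.sdiff_subset.trans (Finset.filter_subset _ _)) fun e he => ?_
      obtain ⟨he, heU⟩ := Finset.mem_sdiff.1 he
      have heE := (Finset.mem_filter.1 he).1
      obtain ⟨x, y, hxy, hx, hy, rfl⟩ := mem_cutEdges.1 he
      refine ⟨y, Finset.mem_sdiff.2 ⟨?_, hy⟩, by simp⟩
      obtain ⟨P, hPE, hPi, hP⟩ := (Finset.mem_filter.1 hx).2
      refine Finset.mem_filter.2 ⟨Finset.mem_univ _, insert s(x, y) P, ?_, ?_, fun A hA hcutA => ?_⟩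
      · exact Finset.insert_subset (Finset.mem_sdiff.2 ⟨heE, heU⟩) hPE
      · exact (Finset.card_insert_le _ _).trans (by omega)
      · have hxA := hP A hA fun e he => hcutA e (Finset.mem_insert_of_mem he)
        exact (mem_iff_of_notMem_cutEdges hxy (hcutA _ (Finset.mem_insert_self _ _))).1 hxA
    have h1 : ((cutEdges G (T i)).card : ℝ) ≤ (cutEdges G (T i) \ U).card + U.card := by
      exact_mod_cast Finset.card_le_card_sdiff_add_card
    have h2 : ((cutEdges G (T i) \ U).card : ℝ) ≤ d * (T (i + 1) \ T i).card := by
      exact_mod_cast hinc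
    rw [Finset.cast_card_sdiff (hTmono i)] at h2
    linarith
  have hsum : ∀ i ≤ L, i * (b * a * Fintype.card V / 2) ≤ d * (T i).card := by
    intro i
    induction i with
    | zero => intro _; simp only [Nat.cast_zero, zero_mul]; positivity
    | succ i ih =>
      intro hi
      have h1 := ih (by omega)
      have h2 := hgrow i (by omega)
      push_cast
      linarith
  have h1 := hsum L le_rfl
  have h2 : ((T L).card : ℝ) ≤ Fintype.card V := by exact_mod_cast Finset.card_le_univ _
  have h3 : (d : ℝ) * (T L).card ≤ d * Fintype.card V := by gcongr
  have h4 := mul_lt_mul_of_pos_right hL hn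
  linarith

end Cut

/-- The vertices lying in components of `H` with at least `R` vertices. -/
def bigVerts (H : SimpleGraph V) (R : ℕ) : Finset V :=
  Finset.univ.filter fun v => R ≤ (compVerts H (H.connectedComponentMk v)).card

/-- Every set with a small cut in `s ∪ t` contains almost all or almost none of the vertices
in large components of `s`. -/
def Unsplit (G : SimpleGraph V) (R : ℕ) (δ ε : ℝ) (s t : Finset (Sym2 V)) : Prop :=
  ∀ A : Finset V, ((cutEdges (keep G (s ∪ t)) A).card : ℝ) ≤ δ * Fintype.card V →
    ((A ∩ bigVerts (keep G s) R).card : ℝ) < ε * Fintype.card V ∨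
    ((bigVerts (keep G s) R \ A).card : ℝ) < ε * Fintype.card V

section Sprinkling

variable {G H : SimpleGraph V} {R : ℕ}

lemma mem_cutEdges_iff {S : Finset V} {x y : V} (h : H.Adj x y) :
    s(x, y) ∈ cutEdges H S ↔ ¬(x ∈ S ↔ y ∈ S) := by
  refine ⟨fun he => ?_, fun hne => ?_⟩
  · obtain ⟨u, w, -, hu, hw, he⟩ := mem_cutEdges.1 he
    rcases Sym2.eq_iff.1 he with ⟨rfl, rfl⟩ | ⟨rfl, rfl⟩ <;> tauto
  · by_contra he
    exact hne (mem_iff_of_notMem_cutEdges h he)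

lemma mem_bigVerts_of_reachable {x y : V} (h : H.Reachable x y) (hx : x ∈ bigVerts H R) :
    y ∈ bigVerts H R := by
  simp only [bigVerts, Finset.mem_filter, Finset.mem_univ, true_and] at hx ⊢
  rwa [← SimpleGraph.ConnectedComponent.eq.2 h]

lemma cutEdges_inter_bigVerts_subset (A : Finset V) :
    cutEdges H (A ∩ bigVerts H R) ⊆ cutEdges H A := by
  intro e he
  obtain ⟨x, y, h, hx, hy, rfl⟩ := mem_cutEdges.1 he
  rw [Finset.mem_inter] at hx hy
  have := mem_bigVerts_of_reachable h.reachable hx.2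
  exact mem_cutEdges.2 ⟨x, y, h, hx.1, fun hyA => hy ⟨hyA, this⟩, rfl⟩

lemma mul_card_image_bigVerts_le (H : SimpleGraph V) (R : ℕ) :
    R * ((bigVerts H R).image H.connectedComponentMk).card ≤ Fintype.card V := by
  refine (Finset.mul_card_image_le_card (s := bigVerts H R) (f := H.connectedComponentMk) R
    fun c hc => ?_).trans (Finset.card_le_univ _)
  obtain ⟨v, hv, rfl⟩ := Finset.mem_image.1 hc
  refine (Finset.mem_filter.1 hv).2.trans (Finset.card_le_card fun w hw => ?_)
  have hw' := (Finset.mem_filter.1 hw).2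
  refine Finset.mem_filter.2 ⟨?_, hw'⟩
  exact mem_bigVerts_of_reachable (SimpleGraph.ConnectedComponent.eq.1 hw').symm hv

lemma eq_of_cutEdges_eq {A A' : Finset V} (hA : A ⊆ bigVerts H R) (hA' : A' ⊆ bigVerts H R)
    (hcut : cutEdges H A = cutEdges H A')
    (hrep : ((bigVerts H R).image H.connectedComponentMk).filter (fun c => c.out ∈ A) =
      ((bigVerts H R).image H.connectedComponentMk).filter fun c => c.out ∈ A') : A = A' := by
  have hwalk : ∀ {x y : V}, H.Walk x y → ((x ∈ A ↔ x ∈ A') → (y ∈ A ↔ y ∈ A')) := by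
    intro x y w
    induction w with
    | nil => exact id
    | cons h w ih =>
      intro hx
      refine ih ?_
      have := mem_cutEdges_iff (S := A) h
      rw [hcut, mem_cutEdges_iff h] at this
      tauto
  have key : ∀ v ∈ bigVerts H R, v ∈ A ↔ v ∈ A' := by
    intro v hv
    obtain ⟨w⟩ := SimpleGraph.ConnectedComponent.eq.1
      (Quot.out_eq (H.connectedComponentMk v) :
        H.connectedComponentMk (H.connectedComponentMk v).out = _)
    refine hwalk w ?_
    have hmem : H.connectedComponentMk v ∈ (bigVerts H R).image H.connectedComponentMk :=
      Finset.mem_image_of_mem _ hv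
    have := Finset.ext_iff.1 hrep (H.connectedComponentMk v)
    simpa [hmem] using this
  ext v
  exact ⟨fun h => (key v (hA h)).1 h, fun h => (key v (hA' h)).2 h⟩

lemma card_small_subsets_le {α : Type*} [DecidableEq α] (E : Finset α) {x m : ℝ} (hx0 : 0 < x)
    (hx1 : x ≤ 1) :
    ((E.powerset.filter fun F => (F.card : ℝ) ≤ m).card : ℝ) ≤
      Real.exp (-m * Real.log x + x * E.card) := by
  have h1 : ((E.powerset.filter fun F => (F.card : ℝ) ≤ m).card : ℝ) * Real.exp (m * Real.log x) ≤
      ∑ F ∈ E.powerset, x ^ F.card := by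
    rw [← nsmul_eq_mul]
    refine (Finset.card_nsmul_le_sum _ (fun F => x ^ F.card) _ fun F hF => ?_).trans
      (Finset.sum_le_sum_of_subset_of_nonneg (Finset.filter_subset _ _) fun _ _ _ => by positivity)
    have hFm := (Finset.mem_filter.1 hF).2
    rw [← Real.exp_log (pow_pos hx0 F.card), Real.log_pow]
    exact Real.exp_le_exp.2 (mul_le_mul_of_nonpos_right hFm (Real.log_nonpos hx0.le hx1))
  have h2 : ∑ F ∈ E.powerset, x ^ F.card ≤ Real.exp (x * E.card) := by
    have := Finset.prod_add (fun _ => x) (fun _ => 1) E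
    simp only [Finset.prod_const, one_pow, mul_one] at this
    rw [← this, mul_comm x, Real.exp_nat_mul]
    exact pow_le_pow_left₀ (by linarith) (Real.add_one_le_exp x) _
  have h3 := h1.trans h2
  rw [Real.exp_add, neg_mul, Real.exp_neg, inv_mul_eq_div, le_div_iff₀ (Real.exp_pos _)]
  exact h3

lemma card_sparse_cuts_le (hR : 0 < R) {x m : ℝ} (hx0 : 0 < x) (hx1 : x ≤ 1) :
    (((bigVerts H R).powerset.filter fun A => ((cutEdges H A).card : ℝ) ≤ m).card : ℝ) ≤
      Real.exp (-m * Real.log x + x * (edgeFinset' H).card) *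
        Real.exp (Real.log 2 / R * Fintype.card V) := by
  set C := (bigVerts H R).image H.connectedComponentMk with hC
  have hcard : ((bigVerts H R).powerset.filter fun A => ((cutEdges H A).card : ℝ) ≤ m).card ≤
      (((edgeFinset' H).powerset.filter fun F => (F.card : ℝ) ≤ m) ×ˢ C.powerset).card := by
    refine Finset.card_le_card_of_injOn
      (fun A => (cutEdges H A, C.filter fun c => c.out ∈ A)) (fun A hA => ?_)
      fun A hA A' hA' h => ?_
    · have hA := Finset.mem_filter.1 (Finset.mem_coe.1 hA)
      refine Finset.mem_coe.2 (Finset.mem_product.2 ⟨Finset.mem_filter.2 ⟨?_, hA.2⟩, ?_⟩)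
      · exact Finset.mem_powerset.2 (Finset.filter_subset _ _)
      · exact Finset.mem_powerset.2 (Finset.filter_subset _ _)
    · have hA := Finset.mem_filter.1 (Finset.mem_coe.1 hA)
      have hA' := Finset.mem_filter.1 (Finset.mem_coe.1 hA')
      obtain ⟨h1, h2⟩ := Prod.mk.inj h
      exact eq_of_cutEdges_eq (Finset.mem_powerset.1 hA.1) (Finset.mem_powerset.1 hA'.1) h1 h2
  have hpow : ((2 : ℝ) ^ C.card) ≤ Real.exp (Real.log 2 / R * Fintype.card V) := by
    rw [← Real.exp_log (show (0 : ℝ) < 2 ^ C.card by positivity), Real.log_pow]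
    refine Real.exp_le_exp.2 ?_
    have h1 : (R : ℝ) * C.card ≤ Fintype.card V := by
      exact_mod_cast mul_card_image_bigVerts_le H R
    have hR' : (0 : ℝ) < R := by exact_mod_cast hR
    have h2 : (C.card : ℝ) ≤ Fintype.card V / R := by
      rw [le_div_iff₀ hR']
      linarith
    calc (C.card : ℝ) * Real.log 2 ≤ Fintype.card V / R * Real.log 2 :=
          mul_le_mul_of_nonneg_right h2 (Real.log_nonneg one_le_two)
      _ = Real.log 2 / R * Fintype.card V := by ring
  rw [Finset.card_product, Finset.card_powerset] at hcard
  refine (Nat.cast_le.2 hcard).trans ?_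
  push_cast
  exact mul_le_mul (card_small_subsets_le _ hx0 hx1) hpow (by positivity) (by positivity)

/-- The sprinkling estimate for one fixed set of vertices in large components. -/
lemma expect_sparse_cut_le [Nonempty V] {b : ℝ} {d : ℕ} (hG : IsExpander G b d) (hb : 0 < b)
    {p : ℝ} (hp0 : 0 ≤ p) (hp1 : p ≤ 1) {ε : ℝ} (hε : 0 < ε) {L : ℕ}
    (hL : 2 * d < L * (b * ε)) (m : ℝ) (s : Finset (Sym2 V)) {A₀ B₀ : Finset V}
    (hAB : Disjoint A₀ B₀) (hA : ε * Fintype.card V ≤ A₀.card)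
    (hB : ε * Fintype.card V ≤ B₀.card) :
    expect (edgeFinset' G) p (fun t => if ∃ A, A₀ ⊆ A ∧ Disjoint A B₀ ∧
        ((cutEdges (keep G (s ∪ t)) A).card : ℝ) ≤ m then 1 else 0) ≤
      Real.exp (m * Real.log 2 +
        Real.log (1 - p ^ L / 2) * (b * ε / (2 * L) * Fintype.card V)) := by
  obtain ⟨F, hF, hdisj, hcard⟩ := exists_disjoint_crossing hG hb hε hL hAB hA hB
  have hpL0 : 0 ≤ p ^ L := pow_nonneg hp0 L
  have hpL1 : p ^ L ≤ 1 := pow_le_one₀ hp0 hp1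
  have hpos : 0 < 1 - p ^ L / 2 := by linarith
  refine (expect_mono hp0 hp1 (g := fun t =>
    if ((F.filter (· ⊆ t)).card : ℝ) ≤ m then 1 else 0) fun t ht => ?_).trans
    ((expect_few_subset_le hp0 hp1 (fun P hP => (hF P hP).1) (fun P hP => (hF P hP).2.1)
      hdisj m).trans ?_)
  · split_ifs with h h' h'
    · exact le_rfl
    · exfalso
      obtain ⟨A, hAA, hAB', hcut⟩ := h
      refine h' (le_trans ?_ hcut)
      have hex : ∀ P ∈ F.filter (· ⊆ t), ∃ e ∈ P, e ∈ cutEdges (keep G (s ∪ t)) A := by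
        intro P hP
        obtain ⟨hPF, hPt⟩ := Finset.mem_filter.1 hP
        obtain ⟨e, heP, he⟩ := (hF P hPF).2.2 A hAA hAB'
        obtain ⟨x, y, hxy, hx, hy, rfl⟩ := mem_cutEdges.1 he
        exact ⟨_, heP, mem_cutEdges.2
          ⟨x, y, ⟨hxy, Finset.mem_union_right _ (hPt heP)⟩, hx, hy, rfl⟩⟩
      have : Nonempty (Sym2 V) := ⟨s(Classical.arbitrary V, Classical.arbitrary V)⟩
      choose! f hf hfc using hex
      have := Finset.card_le_card_of_injOn f hfc fun P hP Q hQ hPQ => by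
        by_contra hne
        have hPF := (Finset.mem_filter.1 (Finset.mem_coe.1 hP)).1
        have hQF := (Finset.mem_filter.1 (Finset.mem_coe.1 hQ)).1
        refine Finset.disjoint_left.1 (hdisj hPF hQF hne) (hf P hP) ?_
        rw [hPQ]
        exact hf Q hQ
      exact_mod_cast this
    · exact zero_le_one
    · exact le_rfl
  · rw [Real.exp_add, Real.rpow_def_of_pos two_pos, mul_comm m]
    refine mul_le_mul_of_nonneg_left ?_ (Real.exp_pos _).le
    rw [← Real.exp_log (pow_pos hpos F.card), Real.log_pow, mul_comm]
    exact Real.exp_le_exp.2 (mul_le_mul_of_nonpos_left hcard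
      (Real.log_nonpos hpos.le (by linarith)))

lemma edgeFinset'_keep_subset (s : Finset (Sym2 V)) :
    edgeFinset' (keep G s) ⊆ edgeFinset' G := by
  intro e he
  rw [mem_edgeFinset'] at he ⊢
  exact SimpleGraph.edgeSet_mono (keep_le s) he

lemma expect_not_unsplit_le [Nonempty V] {b : ℝ} {d : ℕ} (hG : IsExpander G b d) (hb : 0 < b)
    {p : ℝ} (hp0 : 0 ≤ p) (hp1 : p ≤ 1) {ε : ℝ} (hε : 0 < ε) {L : ℕ}
    (hL : 2 * d < L * (b * ε)) {x δ : ℝ} (hx0 : 0 < x) (hx1 : x ≤ 1) (hR : 0 < R)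
    (s : Finset (Sym2 V)) :
    expect (edgeFinset' G) p (fun t => if ¬Unsplit G R δ ε s t then 1 else 0) ≤
      Real.exp ((-δ * Real.log x + x * d + Real.log 2 / R + δ * Real.log 2 +
        Real.log (1 - p ^ L / 2) * (b * ε / (2 * L))) * Fintype.card V) := by
  set n : ℝ := (Fintype.card V : ℝ) with hn
  set W := bigVerts (keep G s) R with hW
  set 𝒜 := (W.powerset.filter fun A => ((cutEdges (keep G s) A).card : ℝ) ≤ δ * n) with h𝒜
  set 𝒜' := 𝒜.filter fun A => ε * n ≤ A.card ∧ ε * n ≤ (W \ A).card with h𝒜'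
  have h1 : expect (edgeFinset' G) p (fun t => if ¬Unsplit G R δ ε s t then 1 else 0) ≤
      ∑ A₀ ∈ 𝒜', expect (edgeFinset' G) p (fun t => if ∃ A, A₀ ⊆ A ∧ Disjoint A (W \ A₀) ∧
        ((cutEdges (keep G (s ∪ t)) A).card : ℝ) ≤ δ * n then 1 else 0) := by
    rw [← expect_sum]
    refine expect_mono hp0 hp1 fun t _ => ?_
    have hnonneg : ∀ A₀ ∈ 𝒜', (0 : ℝ) ≤ if ∃ A, A₀ ⊆ A ∧ Disjoint A (W \ A₀) ∧
        ((cutEdges (keep G (s ∪ t)) A).card : ℝ) ≤ δ * n then 1 else 0 :=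
      fun A₀ _ => by split_ifs <;> norm_num
    by_cases h : Unsplit G R δ ε s t
    · rw [if_neg (not_not.2 h)]
      exact Finset.sum_nonneg hnonneg
    rw [if_pos h]
    unfold Unsplit at h
    push Not at h
    obtain ⟨A, hcut, hA1, hA2⟩ := h
    have hmono : cutEdges (keep G s) A ⊆ cutEdges (keep G (s ∪ t)) A := by
      intro e he
      obtain ⟨x, y, hxy, hx, hy, rfl⟩ := mem_cutEdges.1 he
      exact mem_cutEdges.2 ⟨x, y, keep_mono Finset.subset_union_left hxy, hx, hy, rfl⟩
    have hmem : A ∩ W ∈ 𝒜' := by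
      refine Finset.mem_filter.2 ⟨Finset.mem_filter.2
        ⟨Finset.mem_powerset.2 Finset.inter_subset_right, le_trans ?_ hcut⟩, hA1, ?_⟩
      · exact_mod_cast Finset.card_le_card ((cutEdges_inter_bigVerts_subset A).trans hmono)
      · rwa [Finset.inter_comm, Finset.sdiff_inter_self_left]
    refine le_trans ?_ (Finset.single_le_sum hnonneg hmem)
    have hdisj : Disjoint A (W \ (A ∩ W)) := by
      rw [Finset.inter_comm, Finset.sdiff_inter_self_left]
      exact Finset.disjoint_sdiff
    exact (if_pos ⟨A, Finset.inter_subset_left, hdisj, hcut⟩).ge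
  have h2 : ∀ A₀ ∈ 𝒜', expect (edgeFinset' G) p (fun t => if ∃ A, A₀ ⊆ A ∧ Disjoint A (W \ A₀) ∧
        ((cutEdges (keep G (s ∪ t)) A).card : ℝ) ≤ δ * n then 1 else 0) ≤
      Real.exp (δ * n * Real.log 2 + Real.log (1 - p ^ L / 2) * (b * ε / (2 * L) * n)) :=
    fun A₀ hA₀ => expect_sparse_cut_le hG hb hp0 hp1 hε hL _ s Finset.disjoint_sdiff
      (Finset.mem_filter.1 hA₀).2.1 (Finset.mem_filter.1 hA₀).2.2
  have h3 : (𝒜'.card : ℝ) ≤ Real.exp (-(δ * n) * Real.log x + x * (d * n)) *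
      Real.exp (Real.log 2 / R * n) := by
    have h4 : (𝒜'.card : ℝ) ≤ 𝒜.card := by exact_mod_cast Finset.card_filter_le _ _
    refine h4.trans ((card_sparse_cuts_le hR hx0 hx1).trans ?_)
    have h5 : ((edgeFinset' (keep G s)).card : ℝ) ≤ d * n := by
      rw [hn]
      exact_mod_cast (Finset.card_le_card (edgeFinset'_keep_subset s)).trans
        (card_edgeFinset'_le hG.1)
    gcongr
  refine h1.trans ((Finset.sum_le_card_nsmul _ _ _ h2).trans ?_)
  rw [nsmul_eq_mul]
  refine (mul_le_mul_of_nonneg_right h3 (Real.exp_pos _).le).trans_eq ?_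
  rw [← Real.exp_add, ← Real.exp_add]
  congr 1
  ring

/-- Sprinkling: with overwhelming probability no sparse cut separates the large components. -/
theorem exists_expect_not_unsplit_le {b p ε : ℝ} (hb : 0 < b) (d : ℕ) (hp0 : 0 < p) (hp1 : p ≤ 1)
    (hε : 0 < ε) :
    ∃ δ > 0, ∃ R₀ > 0, ∃ c > 0, ∀ R ≥ R₀, ∀ (V : Type) [Fintype V] [DecidableEq V] [Nonempty V]
      (G : SimpleGraph V), IsExpander G b d → ∀ s,
        expect (edgeFinset' G) p (fun t => if ¬Unsplit G R δ ε s t then 1 else 0) ≤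
          Real.exp (-c * Fintype.card V) := by
  have hbε : 0 < b * ε := mul_pos hb hε
  obtain ⟨L, hL⟩ := exists_nat_gt (2 * d / (b * ε))
  rw [div_lt_iff₀ hbε] at hL
  have hL0 : (0 : ℝ) < L := by
    by_contra h
    have : (0 : ℝ) ≤ d := by positivity
    nlinarith
  have hpL0 : 0 < p ^ L := pow_pos hp0 L
  have hpL1 : p ^ L ≤ 1 := pow_le_one₀ hp0.le hp1
  set l := -(Real.log (1 - p ^ L / 2) * (b * ε / (2 * L))) with hl
  have hl0 : 0 < l := by
    have : Real.log (1 - p ^ L / 2) < 0 := Real.log_neg (by linarith) (by linarith)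
    have : 0 < b * ε / (2 * L) := by positivity
    rw [hl]
    nlinarith
  set x := min 1 (l / (4 * (d + 1))) with hx
  have hx0 : 0 < x := lt_min one_pos (by positivity)
  have hxd : x * d ≤ l / 4 := by
    have h1 : x * d ≤ l / (4 * (d + 1)) * (d + 1) :=
      mul_le_mul (min_le_right _ _) (by linarith) (by positivity) (by positivity)
    have h2 : l / (4 * (d + 1)) * (d + 1) = l / 4 := by field_simp
    linarith
  have hlog2 : 0 < Real.log 2 := Real.log_pos one_lt_two
  have hlogx : Real.log x ≤ 0 := Real.log_nonpos hx0.le (min_le_left _ _)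
  set δ := l / (4 * (Real.log 2 - Real.log x)) with hδ
  have hδ0 : 0 < δ := div_pos hl0 (by linarith)
  have hδl : δ * (Real.log 2 - Real.log x) = l / 4 := by
    have : Real.log 2 - Real.log x ≠ 0 := by linarith
    rw [hδ]
    field_simp
  obtain ⟨R₀, hR₀⟩ := exists_nat_gt (4 * Real.log 2 / l)
  rw [div_lt_iff₀ hl0] at hR₀
  have hR₀0 : 0 < R₀ := by
    rcases Nat.eq_zero_or_pos R₀ with rfl | h
    · simp at hR₀
      linarith
    · exact h
  refine ⟨δ, hδ0, R₀, hR₀0, l / 4, by positivity, fun R hR V _ _ _ G hG s => ?_⟩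
  refine (expect_not_unsplit_le hG hb hp0.le hp1 hε hL hx0 (min_le_left _ _)
    (hR₀0.trans_le hR) s).trans (Real.exp_le_exp.2 ?_)
  refine mul_le_mul_of_nonneg_right ?_ (by positivity)
  have hR' : Real.log 2 / R ≤ l / 4 := by
    have h1 : (R₀ : ℝ) ≤ R := by exact_mod_cast hR
    have h2 : (0 : ℝ) < R := by exact_mod_cast hR₀0.trans_le hR
    rw [div_le_iff₀ h2]
    nlinarith
  linarith

end Sprinkling

/-- The vertices of the component of `z` after removing the edge `vz`. -/
def side (H : SimpleGraph V) (v z : V) : Finset V :=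
  compVerts (H.deleteEdges {s(v, z)}) ((H.deleteEdges {s(v, z)}).connectedComponentMk z)

section Side

variable {G H : SimpleGraph V} {v z x y : V} {k : ℕ}

lemma mem_compVerts {c : H.ConnectedComponent} :
    x ∈ compVerts H c ↔ H.connectedComponentMk x = c := by
  simp [compVerts]

lemma mem_side : x ∈ side H v z ↔ (H.deleteEdges {s(v, z)}).Reachable x z := by
  rw [side, mem_compVerts, SimpleGraph.ConnectedComponent.eq]

lemma self_mem_side : z ∈ side H v z := mem_side.2 .rfl

lemma mem_side_iff_of_adj (h : H.Adj x y) (he : s(x, y) ≠ s(v, z)) :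
    x ∈ side H v z ↔ y ∈ side H v z := by
  have h' : (H.deleteEdges {s(v, z)}).Adj x y := SimpleGraph.deleteEdges_adj.2 ⟨h, he⟩
  rw [mem_side, mem_side]
  exact ⟨fun hx => h'.symm.reachable.trans hx, fun hy => h'.reachable.trans hy⟩

lemma card_cutEdges_side_le : (cutEdges H (side H v z)).card ≤ 1 := by
  refine (Finset.card_le_card (t := {s(v, z)}) fun e he => ?_).trans_eq (Finset.card_singleton _)
  obtain ⟨x, y, h, hx, hy, rfl⟩ := mem_cutEdges.1 he
  by_contra hne
  exact hy ((mem_side_iff_of_adj h (by simpa using hne)).1 hx)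

lemma disjoint_side (hb : H.IsBridge s(v, z)) : Disjoint (side H v z) (side H z v) := by
  rw [Finset.disjoint_left]
  intro x hx hx'
  rw [mem_side] at hx hx'
  rw [Sym2.eq_swap] at hx'
  exact SimpleGraph.isBridge_iff.1 hb (hx'.symm.trans hx)

lemma side_subset_compVerts (h : H.Adj v z) :
    side H v z ⊆ compVerts H (H.connectedComponentMk v) := by
  intro x hx
  rw [mem_compVerts, SimpleGraph.ConnectedComponent.eq]
  exact ((mem_side.1 hx).mono (SimpleGraph.deleteEdges_le _)).trans h.symm.reachable

lemma compVerts_subset_side_union :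
    compVerts H (H.connectedComponentMk v) ⊆ side H v z ∪ side H z v := by
  intro x hx
  rw [mem_compVerts, SimpleGraph.ConnectedComponent.eq] at hx
  obtain ⟨w⟩ := hx.symm
  have hwalk : ∀ {a b : V}, H.Walk a b → a ∈ side H v z ∪ side H z v →
      b ∈ side H v z ∪ side H z v := by
    intro a b w
    induction w with
    | nil => exact id
    | @cons a b _ h w ih =>
      refine fun ha => ih ?_
      rw [Finset.mem_union] at ha ⊢
      by_cases he : s(a, b) = s(v, z)
      · rcases Sym2.eq_iff.1 he with ⟨rfl, rfl⟩ | ⟨rfl, rfl⟩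
        · exact Or.inl self_mem_side
        · exact Or.inr self_mem_side
      · rw [← mem_side_iff_of_adj h he,
          ← mem_side_iff_of_adj h (he <| ·.trans Sym2.eq_swap)]
        exact ha
  exact hwalk w (Finset.mem_union_right _ self_mem_side)

/-- A set bounded by at most the edge `e` contains or avoids a side not containing `e`. -/
lemma side_subset_or_disjoint {X : Finset V} {e : Sym2 V}
    (hX : ∀ x y, H.Adj x y → s(x, y) ≠ e → (x ∈ X ↔ y ∈ X)) {u : V} (hu : u ∈ e)
    (huS : u ∉ side H v z) : side H v z ⊆ X ∨ Disjoint (side H v z) X := by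
  have hwalk : ∀ {a b : V}, (H.deleteEdges {s(v, z)}).Walk a b → a ∈ side H v z →
      (a ∈ X ↔ b ∈ X) := by
    intro a b w
    induction w with
    | nil => exact fun _ => Iff.rfl
    | @cons a b _ h w ih =>
      intro ha
      obtain ⟨hab, hne⟩ := SimpleGraph.deleteEdges_adj.1 h
      have hb := (mem_side_iff_of_adj hab (by simpa using hne)).1 ha
      refine (hX a b hab ?_).trans (ih hb)
      rintro rfl
      rcases Sym2.mem_iff.1 hu with rfl | rfl
      · exact huS ha
      · exact huS hb
  have hz : ∀ x ∈ side H v z, x ∈ X ↔ z ∈ X := by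
    intro x hx
    obtain ⟨w⟩ := mem_side.1 hx
    exact hwalk w hx
  by_cases hzX : z ∈ X
  · exact Or.inl fun x hx => (hz x hx).2 hzX
  · exact Or.inr (Finset.disjoint_left.2 fun x hx hxX => hzX ((hz x hx).1 hxX))

/-- Two sides of bridges of one component are nested, disjoint, or cover the component. -/
lemma side_laminar {v' z' : V} (hb : H.IsBridge s(v, z)) (h' : H.Adj v' z')
    (hc : H.connectedComponentMk v = H.connectedComponentMk v') :
    side H v z ⊆ side H v' z' ∨ side H v' z' ⊆ side H v z ∨
      Disjoint (side H v z) (side H v' z') ∨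
      compVerts H (H.connectedComponentMk v) ⊆ side H v z ∪ side H v' z' := by
  have hX : ∀ x y, H.Adj x y → s(x, y) ≠ s(v', z') →
      (x ∈ side H v' z' ↔ y ∈ side H v' z') := fun x y h he => mem_side_iff_of_adj h he
  by_cases hz' : z' ∈ side H v z
  · have hzT : z' ∉ side H z v := Finset.disjoint_left.1 (disjoint_side hb) hz'
    have hcover := compVerts_subset_side_union (H := H) (v := v) (z := z)
    rcases side_subset_or_disjoint hX (Sym2.mem_mk_right v' z') hzT with h | h
    · exact Or.inr (Or.inr (Or.inr (hcover.trans (Finset.union_subset_union subset_rfl h))))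
    · refine Or.inr (Or.inl fun x hx => ?_)
      have hxc := side_subset_compVerts h' hx
      rw [← hc] at hxc
      rcases Finset.mem_union.1 (hcover hxc) with hx' | hx'
      · exact hx'
      · exact absurd hx (Finset.disjoint_left.1 h hx')
  · rcases side_subset_or_disjoint hX (Sym2.mem_mk_right v' z') hz' with h | h
    · exact Or.inl h
    · exact Or.inr (Or.inr (Or.inl h))

lemma le_card_side (hHG : H ≤ G) {H₁ : SimpleGraph V} (hH₁ : H₁ ≤ H) (hk : k + 1 < G.girth)
    (h : Ext H₁ k v z) : k + 1 ≤ (side H v z).card := by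
  obtain ⟨w, p, hlen, hchain⟩ := (h.mono hH₁).exists_walk
  have hpath : (SimpleGraph.Walk.cons (h.mono hH₁).adj p).IsPath := by
    rw [← SimpleGraph.Walk.isPath_mapLe hHG]
    refine isPath_of_isChain _ ?_ ?_
    · rwa [SimpleGraph.Walk.edges_mapLe_eq_edges]
    · rw [SimpleGraph.Walk.length_mapLe, SimpleGraph.Walk.length_cons, hlen]
      exact hk
  obtain ⟨hp, hv⟩ := (SimpleGraph.Walk.cons_isPath_iff _ _).1 hpath
  rw [← hlen, ← p.length_support, ← List.toFinset_card_of_nodup hp.support_nodup]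
  refine Finset.card_le_card fun u hu => mem_side.2 ?_
  have hu : u ∈ p.support := by simpa using hu
  refine SimpleGraph.Reachable.symm ⟨(p.takeUntil u hu).toDeleteEdges _ fun e he hev => ?_⟩
  have he := p.edges_takeUntil_subset_edges hu he
  rw [Set.mem_singleton_iff.1 hev] at he
  exact hv (p.fst_mem_support_of_mem_edges he)

lemma mem_bigVerts_of_ext {R : ℕ} (hHG : H ≤ G) (hk : k + 1 < G.girth) (hR : R ≤ k)
    (h : Ext H k v z) : v ∈ bigVerts H R := by
  refine Finset.mem_filter.2 ⟨Finset.mem_univ _, ?_⟩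
  have := (le_card_side hHG le_rfl hk h).trans
    (Finset.card_le_card (side_subset_compVerts h.adj))
  omega

/-- All vertices of a component larger than any ball of radius `k + 1` are extendable. -/
lemma exists_ext_of_card_lt {d : ℕ} (hd : ∀ v, (G.neighborSet v).ncard ≤ d) (hHG : H ≤ G)
    (hcard : (d + 1) ^ (k + 1) < (compVerts H (H.connectedComponentMk v)).card) :
    ∃ z, Ext H k v z := by
  obtain ⟨w, hw, hwb⟩ := Finset.exists_mem_notMem_of_card_lt_card
    ((card_ball_le hd (k + 1) v).trans_lt hcard)
  obtain ⟨p⟩ := SimpleGraph.ConnectedComponent.eq.1 (mem_compVerts.1 hw).symm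
  have hlen : k + 1 < p.bypass.length := by
    by_contra! hle
    refine hwb ?_
    have := mem_ball_of_walk (k := 0) (u := v) (by simp [ball]) (p.bypass.mapLe hHG)
    rw [SimpleGraph.Walk.length_mapLe, Nat.zero_add] at this
    exact ball_mono hle v this
  have hp := p.bypass_isPath
  revert hlen hp
  generalize p.bypass = p'
  intro hlen hp
  cases p' with
  | nil => simp at hlen
  | @cons _ z _ h p' =>
    rw [SimpleGraph.Walk.length_cons] at hlen
    exact ⟨z, ext_of_isPath h p' hp k (by omega)⟩

end Side

section Small

/-- A family of small sets with large union has a subfamily with union of intermediate size. -/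
lemma exists_subset_card_biUnion_inter (W : Finset V) {a : ℝ} (ha : 0 < a) (𝓢 : Finset (Finset V))
    (hS : ∀ S ∈ 𝓢, ((S ∩ W).card : ℝ) < a) (h : a ≤ ((𝓢.biUnion id) ∩ W).card) :
    ∃ 𝓢' ⊆ 𝓢, a ≤ ((𝓢'.biUnion id) ∩ W).card ∧ (((𝓢'.biUnion id) ∩ W).card : ℝ) < 2 * a := by
  induction 𝓢 using Finset.induction_on with
  | empty => exact absurd (by simpa using h) (not_le.2 ha)
  | insert S 𝓢 hSn ih =>
    by_cases h' : a ≤ ((𝓢.biUnion id) ∩ W).card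
    · obtain ⟨𝓢', hsub, h1⟩ := ih (fun S hS' => hS S (Finset.mem_insert_of_mem hS')) h'
      exact ⟨𝓢', hsub.trans (Finset.subset_insert _ _), h1⟩
    · refine ⟨_, subset_rfl, h, ?_⟩
      have h1 := hS S (Finset.mem_insert_self _ _)
      have h2 : ((((insert S 𝓢).biUnion id) ∩ W).card : ℝ) ≤
          (S ∩ W).card + ((𝓢.biUnion id) ∩ W).card := by
        rw [Finset.biUnion_insert, Finset.union_inter_distrib_right]
        exact_mod_cast Finset.card_union_le _ _
      push Not at h'
      linarith

end Small

section Deterministic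

variable {G : SimpleGraph V} {R k d : ℕ} {δ ε : ℝ} {s t : Finset (Sym2 V)}

/-- A family with sparse unions whose members contain few vertices of large components has a
union containing few vertices of large components. -/
lemma Unsplit.card_biUnion_lt (hU : Unsplit G R δ ε s t) (hε : 0 < ε * Fintype.card V)
    (hW : 3 * (ε * Fintype.card V) ≤ (bigVerts (keep G s) R).card) {𝓢 : Finset (Finset V)}
    (hS : ∀ S ∈ 𝓢, ((S ∩ bigVerts (keep G s) R).card : ℝ) < ε * Fintype.card V)
    (hcut : ∀ 𝓢' ⊆ 𝓢, ((cutEdges (keep G (s ∪ t)) (𝓢'.biUnion id)).card : ℝ) ≤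
      δ * Fintype.card V) :
    (((𝓢.biUnion id) ∩ bigVerts (keep G s) R).card : ℝ) < ε * Fintype.card V := by
  by_contra! h
  obtain ⟨𝓢', hsub, h1, h2⟩ := exists_subset_card_biUnion_inter _ hε 𝓢 hS h
  have h3 : ((bigVerts (keep G s) R).card : ℝ) ≤ ((𝓢'.biUnion id) ∩ bigVerts (keep G s) R).card +
      (bigVerts (keep G s) R \ 𝓢'.biUnion id).card := by
    rw [Finset.inter_comm]
    exact_mod_cast (Finset.card_inter_add_card_sdiff _ _).ge
  rcases hU _ (hcut 𝓢' hsub) with h4 | h4 <;> linarith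

lemma cutEdges_biUnion_subset (H : SimpleGraph V) (𝓢 : Finset (Finset V)) :
    cutEdges H (𝓢.biUnion id) ⊆ 𝓢.biUnion (cutEdges H) := by
  intro e he
  obtain ⟨x, y, h, hx, hy, rfl⟩ := mem_cutEdges.1 he
  obtain ⟨S, hS, hxS⟩ := Finset.mem_biUnion.1 hx
  exact Finset.mem_biUnion.2 ⟨S, hS, mem_cutEdges.2
    ⟨x, y, h, hxS, fun hyS => hy (Finset.mem_biUnion.2 ⟨S, hS, hyS⟩), rfl⟩⟩

lemma cutEdges_compVerts (H : SimpleGraph V) (c : H.ConnectedComponent) :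
    cutEdges H (compVerts H c) = ∅ := by
  refine Finset.eq_empty_of_forall_notMem fun e he => ?_
  obtain ⟨x, y, h, hx, hy, rfl⟩ := mem_cutEdges.1 he
  rw [mem_compVerts] at hx hy
  exact hy (hx ▸ (SimpleGraph.ConnectedComponent.eq.2 h.reachable).symm)

lemma Unsplit.exists_component (hU : Unsplit G R δ ε s t) (hδ : 0 ≤ δ)
    (hε : 0 < ε * Fintype.card V)
    (hW : 3 * (ε * Fintype.card V) ≤ (bigVerts (keep G s) R).card) :
    ∃ c : (keep G (s ∪ t)).ConnectedComponent,
      ε * Fintype.card V ≤ (compVerts (keep G (s ∪ t)) c ∩ bigVerts (keep G s) R).card := by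
  by_contra! h
  set 𝓢 : Finset (Finset V) := Finset.univ.image (compVerts (keep G (s ∪ t))) with h𝓢
  have huniv : 𝓢.biUnion id = Finset.univ := by
    refine Finset.eq_univ_of_forall fun v => Finset.mem_biUnion.2
      ⟨_, Finset.mem_image_of_mem _ (Finset.mem_univ ((keep G (s ∪ t)).connectedComponentMk v)), ?_⟩
    exact mem_compVerts.2 rfl
  have hlt := hU.card_biUnion_lt hε hW (𝓢 := 𝓢) (fun S hS => ?_) fun 𝓢' h𝓢' => ?_
  · rw [huniv, Finset.univ_inter] at hlt
    linarith
  · obtain ⟨c, -, rfl⟩ := Finset.mem_image.1 hS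
    exact h c
  · have : cutEdges (keep G (s ∪ t)) (𝓢'.biUnion id) = ∅ := by
      refine Finset.subset_empty.1 ((cutEdges_biUnion_subset _ _).trans fun e he => ?_)
      obtain ⟨S, hS, he⟩ := Finset.mem_biUnion.1 he
      obtain ⟨c, -, rfl⟩ := Finset.mem_image.1 (h𝓢' hS)
      rwa [cutEdges_compVerts] at he
    rw [this, Finset.card_empty, Nat.cast_zero]
    positivity

/-- The vertices starting a non-backtracking walk with `k + 1` edges of `s`. -/
def extVerts (G : SimpleGraph V) (k : ℕ) (s : Finset (Sym2 V)) : Finset V :=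
  Finset.univ.filter fun v => 1 ≤ extCount G k v s

lemma mem_extVerts {v : V} : v ∈ extVerts G k s ↔ ∃ z, Ext (keep G s) k v z := by
  simp only [extVerts, Finset.mem_filter, Finset.mem_univ, true_and, extCount,
    Nat.one_le_iff_ne_zero, ← Nat.pos_iff_ne_zero, Finset.card_pos]
  constructor
  · rintro ⟨z, hz⟩
    exact ⟨z, (Finset.mem_filter.1 hz).2⟩
  · rintro ⟨z, hz⟩
    exact ⟨z, Finset.mem_filter.2 ⟨mem_nbr.2 hz.adj.1, hz⟩⟩

lemma card_extVerts :
    ((extVerts G k s).card : ℝ) = stat G k (fun j => if 1 ≤ j then 1 else 0) s := by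
  rw [stat, Finset.sum_boole, extVerts]

lemma extVerts_mono (h : s ⊆ t) : extVerts G k s ⊆ extVerts G k t := by
  intro v hv
  obtain ⟨z, hz⟩ := mem_extVerts.1 hv
  exact mem_extVerts.2 ⟨z, hz.mono (keep_mono h)⟩

lemma extVerts_subset_bigVerts (hk : k + 1 < G.girth) (hR : R ≤ k) :
    extVerts G k s ⊆ bigVerts (keep G s) R := by
  intro v hv
  obtain ⟨z, hz⟩ := mem_extVerts.1 hv
  exact mem_bigVerts_of_ext (keep_le s) hk hR hz

lemma Unsplit.le_card_largest (hU : Unsplit G R δ ε s t) (hδ : 0 ≤ δ)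
    (hε : 0 < ε * Fintype.card V) (hd : ∀ v, (G.neighborSet v).ncard ≤ d)
    (hk : k + 1 < G.girth) (hR : R ≤ k) (hM : ((d : ℝ) + 1) ^ (k + 1) ≤ 2 * (ε * Fintype.card V))
    (hstat : stat G k (fun j => if 1 ≤ j then 1 else 0) (s ∪ t) -
      stat G k (fun j => if 1 ≤ j then 1 else 0) s ≤ ε * Fintype.card V)
    (hW : 3 * (ε * Fintype.card V) ≤ (bigVerts (keep G s) R).card)
    {c₁ : (keep G (s ∪ t)).ConnectedComponent} (hc₁ : IsLargestComp (keep G (s ∪ t)) c₁) :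
    ε * Fintype.card V ≤ (compVerts (keep G (s ∪ t)) c₁ ∩ bigVerts (keep G s) R).card := by
  set W := bigVerts (keep G s) R
  by_contra! hlt
  obtain ⟨c, hc⟩ := hU.exists_component hδ hε hW
  have hcut : ((cutEdges (keep G (s ∪ t)) (compVerts (keep G (s ∪ t)) c)).card : ℝ) ≤
      δ * Fintype.card V := by
    rw [cutEdges_compVerts, Finset.card_empty, Nat.cast_zero]
    positivity
  have hWc : ((W \ compVerts (keep G (s ∪ t)) c).card : ℝ) < ε * Fintype.card V :=
    (hU _ hcut).resolve_left (not_lt.2 hc)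
  have h1 : (W.card : ℝ) ≤ (compVerts (keep G (s ∪ t)) c).card +
      (W \ compVerts (keep G (s ∪ t)) c).card := by
    have h2 := Finset.card_inter_add_card_sdiff W (compVerts (keep G (s ∪ t)) c)
    have h3 := Finset.card_le_card
      (Finset.inter_subset_right (s₁ := W) (s₂ := compVerts (keep G (s ∪ t)) c))
    exact_mod_cast (by omega : W.card ≤ (compVerts (keep G (s ∪ t)) c).card +
      (W \ compVerts (keep G (s ∪ t)) c).card)
  have h2 : ((compVerts (keep G (s ∪ t)) c).card : ℝ) ≤ (compVerts (keep G (s ∪ t)) c₁).card := by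
    exact_mod_cast hc₁ c
  have hbig : (d + 1) ^ (k + 1) < (compVerts (keep G (s ∪ t)) c₁).card := by
    have : ((d : ℝ) + 1) ^ (k + 1) < (compVerts (keep G (s ∪ t)) c₁).card := by linarith
    exact_mod_cast this
  have hsub : compVerts (keep G (s ∪ t)) c₁ ⊆ extVerts G k (s ∪ t) := by
    intro v hv
    rw [← mem_compVerts.1 hv] at hbig
    exact mem_extVerts.2 (exists_ext_of_card_lt hd (keep_le _) hbig)
  have hsub' : compVerts (keep G (s ∪ t)) c₁ ⊆
      (compVerts (keep G (s ∪ t)) c₁ ∩ W) ∪ (extVerts G k (s ∪ t) \ extVerts G k s) := by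
    intro v hv
    by_cases hvs : v ∈ extVerts G k s
    · exact Finset.mem_union_left _
        (Finset.mem_inter.2 ⟨hv, extVerts_subset_bigVerts hk hR hvs⟩)
    · exact Finset.mem_union_right _ (Finset.mem_sdiff.2 ⟨hsub hv, hvs⟩)
  have h3 : ((compVerts (keep G (s ∪ t)) c₁).card : ℝ) ≤ (compVerts (keep G (s ∪ t)) c₁ ∩ W).card +
      (extVerts G k (s ∪ t) \ extVerts G k s).card := by
    exact_mod_cast (Finset.card_le_card hsub').trans (Finset.card_union_le _ _)
  rw [Finset.cast_card_sdiff (extVerts_mono Finset.subset_union_left), card_extVerts,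
    card_extVerts] at h3
  linarith

/-- Sides of bridges of the largest component containing few vertices of large components
contain few vertices of large components altogether. -/
lemma Unsplit.card_biUnion_side_lt (hU : Unsplit G R δ ε s t) (hδ : 0 ≤ δ)
    (hε : 0 < ε * Fintype.card V) (hδk : 1 ≤ δ * (k + 1))
    (hW : 3 * (ε * Fintype.card V) ≤ (bigVerts (keep G s) R).card)
    {c₁ : (keep G (s ∪ t)).ConnectedComponent}
    (hc₁ : ε * Fintype.card V ≤
      (compVerts (keep G (s ∪ t)) c₁ ∩ bigVerts (keep G s) R).card)
    {𝓢 : Finset (Finset V)}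
    (hS : ∀ S ∈ 𝓢, ((S ∩ bigVerts (keep G s) R).card : ℝ) < ε * Fintype.card V ∧
      k + 1 ≤ S.card ∧ ∃ v z, S = side (keep G (s ∪ t)) v z ∧ (keep G (s ∪ t)).Adj v z ∧
        (keep G (s ∪ t)).IsBridge s(v, z) ∧ (keep G (s ∪ t)).connectedComponentMk v = c₁) :
    (((𝓢.biUnion id) ∩ bigVerts (keep G s) R).card : ℝ) < ε * Fintype.card V := by
  set W := bigVerts (keep G s) R
  set 𝓜 := 𝓢.filter (Maximal (· ∈ 𝓢)) with h𝓜
  have hcut₁ : ((cutEdges (keep G (s ∪ t)) (compVerts (keep G (s ∪ t)) c₁)).card : ℝ) ≤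
      δ * Fintype.card V := by
    rw [cutEdges_compVerts, Finset.card_empty, Nat.cast_zero]
    positivity
  have hWc : ((W \ compVerts (keep G (s ∪ t)) c₁).card : ℝ) < ε * Fintype.card V :=
    (hU _ hcut₁).resolve_left (not_lt.2 hc₁)
  have hunion : 𝓢.biUnion id = 𝓜.biUnion id := by
    refine subset_antisymm (fun x hx => ?_)
      (Finset.biUnion_subset_biUnion_of_subset_left _ (Finset.filter_subset _ _))
    obtain ⟨S, hSm, hxS⟩ := Finset.mem_biUnion.1 hx
    obtain ⟨M, hSM, hM⟩ := Finset.exists_le_maximal 𝓢 hSm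
    exact Finset.mem_biUnion.2 ⟨M, Finset.mem_filter.2 ⟨hM.prop, hM⟩, hSM hxS⟩
  have hdisj : (𝓜 : Set (Finset V)).PairwiseDisjoint id := by
    intro S hSm S' hSm' hne
    obtain ⟨hS1, hS2⟩ := Finset.mem_filter.1 (Finset.mem_coe.1 hSm)
    obtain ⟨hS1', hS2'⟩ := Finset.mem_filter.1 (Finset.mem_coe.1 hSm')
    obtain ⟨hlt, -, v, z, hSeq, -, hb, hv⟩ := hS S hS1
    obtain ⟨hlt', -, v', z', hSeq', hadj', -, hv'⟩ := hS S' hS1'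
    have hlam := side_laminar hb hadj' (hv.trans hv'.symm)
    rw [← hSeq, ← hSeq', hv] at hlam
    rcases hlam with h | h | h | h
    · exact absurd (hS2.eq_of_le hS1' h) hne
    · exact absurd (hS2'.eq_of_le hS1 h).symm hne
    · exact h
    · exfalso
      have hsub : W ⊆ (W \ compVerts (keep G (s ∪ t)) c₁) ∪ ((S ∩ W) ∪ (S' ∩ W)) := by
        intro x hx
        by_cases hxc : x ∈ compVerts (keep G (s ∪ t)) c₁
        · rw [← Finset.union_inter_distrib_right]
          exact Finset.mem_union_right _ (Finset.mem_inter.2 ⟨h hxc, hx⟩)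
        · exact Finset.mem_union_left _ (Finset.mem_sdiff.2 ⟨hx, hxc⟩)
      have h1 : (W.card : ℝ) ≤ (W \ compVerts (keep G (s ∪ t)) c₁).card +
          ((S ∩ W).card + (S' ∩ W).card) := by
        exact_mod_cast (Finset.card_le_card hsub).trans ((Finset.card_union_le _ _).trans
          (Nat.add_le_add_left (Finset.card_union_le _ _) _))
      linarith
  have hcard : (𝓜.card : ℝ) ≤ δ * Fintype.card V := by
    have h1 : 𝓜.card * (k + 1) ≤ Fintype.card V := by
      rw [← smul_eq_mul]
      refine (Finset.card_nsmul_le_sum 𝓜 Finset.card (k + 1) fun S hSm => ?_).trans ?_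
      · exact (hS S (Finset.mem_filter.1 hSm).1).2.1
      · exact (Finset.card_biUnion hdisj).symm.trans_le (Finset.card_le_univ _)
    have h2 : (𝓜.card : ℝ) * (k + 1) ≤ Fintype.card V := by exact_mod_cast h1
    have h3 : (𝓜.card : ℝ) * 1 ≤ 𝓜.card * (δ * (k + 1)) := by gcongr
    nlinarith
  rw [hunion]
  refine hU.card_biUnion_lt hε hW (fun S hSm => (hS S (Finset.mem_filter.1 hSm).1).1)
    fun 𝓢' h𝓢' => le_trans ?_ hcard
  have h1 : (cutEdges (keep G (s ∪ t)) (𝓢'.biUnion id)).card ≤ 𝓢'.card * 1 := by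
    refine (Finset.card_le_card (cutEdges_biUnion_subset _ _)).trans
      (Finset.card_biUnion_le_card_mul _ _ 1 fun S hSm => ?_)
    obtain ⟨-, -, v, z, rfl, -⟩ := hS S (Finset.mem_filter.1 (h𝓢' hSm)).1
    exact card_cutEdges_side_le
  have h2 := Finset.card_le_card h𝓢'
  exact_mod_cast (by omega : (cutEdges (keep G (s ∪ t)) (𝓢'.biUnion id)).card ≤ 𝓜.card)

/-- All but few extendable darts at vertices with two extendable darts lie in the 2-core of the
largest component. -/
theorem Unsplit.exists_exceptional (hU : Unsplit G R δ ε s t) (hδ : 0 ≤ δ)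
    (hε : 0 < ε * Fintype.card V) (hδk : 1 ≤ δ * (k + 1))
    (hd : ∀ v, (G.neighborSet v).ncard ≤ d)
    (hk : k + 1 < G.girth) (hR : R ≤ k) (hM : ((d : ℝ) + 1) ^ (k + 1) ≤ 2 * (ε * Fintype.card V))
    (hstat : stat G k (fun j => if 1 ≤ j then 1 else 0) (s ∪ t) -
      stat G k (fun j => if 1 ≤ j then 1 else 0) s ≤ ε * Fintype.card V)
    {c₁ : (keep G (s ∪ t)).ConnectedComponent} (hc₁ : IsLargestComp (keep G (s ∪ t)) c₁) :
    ∃ B : Finset V, (B.card : ℝ) ≤ (d + 3) * (ε * Fintype.card V) ∧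
      ∀ v ∉ B, 2 ≤ extCount G k v s → ∀ z, Ext (keep G s) k v z →
        (twoCoreComp (keep G (s ∪ t)) c₁).Adj v z := by
  set W := bigVerts (keep G s) R with hWdef
  have hH₁ : keep G s ≤ (keep G (s ∪ t)) := keep_mono Finset.subset_union_left
  have hd0 : (0 : ℝ) ≤ d := by positivity
  have hext : ∀ {v z}, Ext (keep G s) k v z → v ∈ W := fun h =>
    mem_bigVerts_of_ext (keep_le s) hk hR h
  rcases lt_or_ge (W.card : ℝ) (3 * (ε * Fintype.card V)) with hW | hW
  · refine ⟨W, by nlinarith, fun v hv _ z hz => absurd (hext hz) hv⟩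
  have hc₁W := hU.le_card_largest hδ hε hd hk hR hM hstat hW hc₁
  set 𝓢 : Finset (Finset V) := Finset.univ.filter fun S =>
    ((S ∩ W).card : ℝ) < ε * Fintype.card V ∧ k + 1 ≤ S.card ∧
      ∃ v z, S = side (keep G (s ∪ t)) v z ∧ (keep G (s ∪ t)).Adj v z ∧
        (keep G (s ∪ t)).IsBridge s(v, z) ∧ (keep G (s ∪ t)).connectedComponentMk v = c₁ with h𝓢
  have hlt := hU.card_biUnion_side_lt hδ hε hδk hW hc₁W (𝓢 := 𝓢)
    fun S hS => (Finset.mem_filter.1 hS).2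
  have hcut₁ : ((cutEdges (keep G (s ∪ t)) (compVerts (keep G (s ∪ t)) c₁)).card : ℝ) ≤
      δ * Fintype.card V := by
    rw [cutEdges_compVerts, Finset.card_empty, Nat.cast_zero]
    positivity
  have hWc : ((W \ compVerts (keep G (s ∪ t)) c₁).card : ℝ) < ε * Fintype.card V :=
    (hU _ hcut₁).resolve_left (not_lt.2 hc₁W)
  have hone : 1 ≤ δ * Fintype.card V := by
    have h1 : ((k : ℝ) + 1) ≤ Fintype.card V := by
      exact_mod_cast hk.le.trans (girth_le_card G)
    exact hδk.trans (mul_le_mul_of_nonneg_left h1 hδ)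
  set X := (𝓢.biUnion id) ∩ W with hX
  refine ⟨(W \ compVerts (keep G (s ∪ t)) c₁) ∪ (X ∪ X.biUnion (nbr G)), ?_, fun v hv h2 z hz => ?_⟩
  · have h1 : (X.biUnion (nbr G)).card ≤ X.card * d :=
      Finset.card_biUnion_le_card_mul _ _ d fun v _ => (card_nbr v).trans_le (hd v)
    have h2 : (((W \ compVerts (keep G (s ∪ t)) c₁) ∪ (X ∪ X.biUnion (nbr G))).card : ℝ) ≤
        (W \ compVerts (keep G (s ∪ t)) c₁).card + (X.card + X.card * d) := by
      exact_mod_cast (Finset.card_union_le _ _).trans (Nat.add_le_add_left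
        ((Finset.card_union_le _ _).trans (Nat.add_le_add_left h1 _)) _)
    nlinarith
  · have hvW := hext hz
    simp only [Finset.mem_union, not_or] at hv
    obtain ⟨hv1, hv2, hv3⟩ := hv
    have hvc : (keep G (s ∪ t)).connectedComponentMk v = c₁ := by
      by_contra h
      exact hv1 (Finset.mem_sdiff.2 ⟨hvW, fun h' => h (mem_compVerts.1 h')⟩)
    have hadj := hH₁ hz.adj
    by_contra hcore
    have hb : (keep G (s ∪ t)).IsBridge s(v, z) := by
      by_contra hb
      exact hcore (twoCoreComp_adj_of_not_isBridge hadj hvc hb)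
    obtain ⟨z', hz', hne⟩ : ∃ z', Ext (keep G s) k v z' ∧ z' ≠ z := by
      obtain ⟨z', hz', hne⟩ := Finset.exists_mem_ne (by omega : 1 < extCount G k v s) z
      exact ⟨z', (Finset.mem_filter.1 hz').2, hne⟩
    have hrev := Ext.reverse hz.adj hne hz'
    have hzW := hext hrev
    have hzc : (keep G (s ∪ t)).connectedComponentMk z = c₁ :=
      hvc ▸ (SimpleGraph.ConnectedComponent.eq.2 hadj.reachable).symm
    have hcard := le_card_side (keep_le (s ∪ t)) hH₁ hk hz
    have hcard' := le_card_side (keep_le (s ∪ t)) hH₁ hk hrev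
    have hsmall : ((side (keep G (s ∪ t)) v z ∩ W).card : ℝ) < ε * Fintype.card V ∨
        ((side (keep G (s ∪ t)) z v ∩ W).card : ℝ) < ε * Fintype.card V := by
      refine (hU (side (keep G (s ∪ t)) v z) ?_).imp_right fun h => lt_of_le_of_lt ?_ h
      · refine le_trans ?_ hone
        exact_mod_cast card_cutEdges_side_le
      · refine Nat.cast_le.2 (Finset.card_le_card fun x hx => ?_)
        obtain ⟨hx1, hx2⟩ := Finset.mem_inter.1 hx
        exact Finset.mem_sdiff.2 ⟨hx2, Finset.disjoint_right.1 (disjoint_side hb) hx1⟩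
    rcases hsmall with h | h
    · have hmem : side (keep G (s ∪ t)) v z ∈ 𝓢 := Finset.mem_filter.2
        ⟨Finset.mem_univ _, h, hcard, v, z, rfl, hadj, hb, hvc⟩
      refine hv3 (Finset.mem_biUnion.2 ⟨z, Finset.mem_inter.2 ⟨?_, hzW⟩, mem_nbr.2 hadj.1.symm⟩)
      exact Finset.mem_biUnion.2 ⟨_, hmem, self_mem_side⟩
    · have hmem : side (keep G (s ∪ t)) z v ∈ 𝓢 := Finset.mem_filter.2
        ⟨Finset.mem_univ _, h, hcard', z, v, rfl, hadj.symm, by rwa [Sym2.eq_swap], hzc⟩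
      exact hv2 (Finset.mem_inter.2 ⟨Finset.mem_biUnion.2 ⟨_, hmem, self_mem_side⟩, hvW⟩)

end Deterministic

section Assembly

/-- On the event that the sprinkled graph is unsplit and the numbers of extendable darts are close
to their typical values before and after sprinkling, the 2-core of the largest component has the
typical size. -/
lemma Unsplit.core_size {G : SimpleGraph V} {R k d : ℕ} {δ ε a₁ a₂ a₃ : ℝ}
    {s t : Finset (Sym2 V)} (hU : Unsplit G R δ ε s t) (hδ : 0 ≤ δ) (hε : 0 < ε) [Nonempty V]
    (hδk : 1 ≤ δ * (k + 1)) (hd0 : 1 ≤ d) (hd : ∀ v, (G.neighborSet v).ncard ≤ d)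
    (hk : k + 1 < G.girth) (hR : R ≤ k) (hM : ((d : ℝ) + 1) ^ (k + 1) ≤ 2 * (ε * Fintype.card V))
    (hl₁ : Fintype.card V * (a₁ - ε / 2) ≤ stat G k (fun j => if 1 ≤ j then 1 else 0) s)
    (hl₂ : Fintype.card V * (a₂ - ε / 2) ≤ stat G k (fun j => if 2 ≤ j then 1 else 0) s)
    (hl₃ : Fintype.card V * (a₃ - ε / 2) ≤ stat G k (fun j => if 2 ≤ j then (j : ℝ) else 0) s)
    (hu₁ : stat G k (fun j => if 1 ≤ j then 1 else 0) (s ∪ t) ≤ Fintype.card V * (a₁ + ε / 2))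
    (hu₂ : stat G k (fun j => if 2 ≤ j then 1 else 0) (s ∪ t) ≤ Fintype.card V * (a₂ + ε / 2))
    (hu₃ : stat G k (fun j => if 2 ≤ j then (j : ℝ) else 0) (s ∪ t) ≤
      Fintype.card V * (a₃ + ε / 2))
    {c₁ : (keep G (s ∪ t)).ConnectedComponent} (hc₁ : IsLargestComp (keep G (s ∪ t)) c₁) :
    |((twoCoreComp (keep G (s ∪ t)) c₁).support.ncard : ℝ) / Fintype.card V - a₂| <
        (d + 1) * (d + 3) * ε ∧
      |((twoCoreComp (keep G (s ∪ t)) c₁).edgeSet.ncard : ℝ) / Fintype.card V - a₃ / 2| <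
        (d + 1) * (d + 3) * ε := by
  have hn : (0 : ℝ) < Fintype.card V := by exact_mod_cast Fintype.card_pos
  have hd1 : (1 : ℝ) ≤ d := by exact_mod_cast hd0
  have hεn : 0 < ε * Fintype.card V := by positivity
  obtain ⟨B, hBc, hB⟩ := hU.exists_exceptional hδ hεn hδk hd hk hR hM (by linarith) hc₁
  have hle := twoCoreComp_le (c := c₁)
  have hdeg := fun v hv => two_le_ncard_twoCoreComp (c := c₁) (v := v) hv
  have h1 := ncard_support_le_stat hle hdeg k
  have h2 := two_mul_ncard_edgeSet_le_stat hle hdeg k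
  have h3 := stat_le_ncard_support_add hB
  have h4 := stat_le_two_mul_ncard_edgeSet_add hd hB
  have h5 : (d : ℝ) * B.card ≤ d * ((d + 3) * (ε * Fintype.card V)) := by gcongr
  have h6 : ε * Fintype.card V ≤ d * (ε * Fintype.card V) := le_mul_of_one_le_left hεn.le hd1
  have h7 : d * (ε * Fintype.card V) ≤ d * (d * (ε * Fintype.card V)) := by gcongr
  constructor <;> rw [abs_lt, lt_sub_iff_add_lt, lt_div_iff₀ hn, sub_lt_iff_lt_add, div_lt_iff₀ hn]
    <;> constructor <;> nlinarith

/-- A union bound for events in two independent percolations and in their union. -/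
lemma one_sub_le_expect {α ι : Type*} [DecidableEq α] [Fintype ι] {E : Finset α} {p p₁ p₂ x : ℝ}
    (h : 1 - p = (1 - p₁) * (1 - p₂)) (hp₁ : 0 ≤ p₁) (hp₁' : p₁ ≤ 1) (hp₂ : 0 ≤ p₂) (hp₂' : p₂ ≤ 1)
    {F : Finset α → Prop} {L U : ι → Finset α → Prop} {S : Finset α → Finset α → Prop}
    (hF : ∀ s ⊆ E, ∀ t ⊆ E, (∀ i, ¬ L i s) → (∀ i, ¬ U i (s ∪ t)) → S s t → F (s ∪ t))
    (hL : ∀ i, expect E p₁ (fun s => if L i s then 1 else 0) ≤ x)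
    (hU : ∀ i, expect E p (fun s => if U i s then 1 else 0) ≤ x)
    (hS : ∀ s, expect E p₂ (fun t => if ¬ S s t then 1 else 0) ≤ x) :
    1 - (2 * Fintype.card ι + 1) * x ≤ expect E p (fun s => if F s then 1 else 0) := by
  have hbound : expect E p₁ (fun s => expect E p₂ (fun _ => (1 : ℝ))) ≤
      expect E p₁ (fun s => expect E p₂ (fun t => (if F (s ∪ t) then 1 else 0) +
        (∑ i, (if U i (s ∪ t) then 1 else 0) + (∑ i, (if L i s then 1 else 0) +
          if ¬ S s t then 1 else 0)))) := by
    refine expect_mono hp₁ hp₁' fun s hs => expect_mono hp₂ hp₂' fun t ht => ?_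
    have hU0 : (0 : ℝ) ≤ ∑ i, (if U i (s ∪ t) then 1 else 0) :=
      Finset.sum_nonneg fun i _ => by split_ifs <;> norm_num
    have hL0 : (0 : ℝ) ≤ ∑ i, (if L i s then 1 else 0) :=
      Finset.sum_nonneg fun i _ => by split_ifs <;> norm_num
    have hS0 : (0 : ℝ) ≤ if ¬ S s t then 1 else 0 := by split_ifs <;> norm_num
    have hF0 : (0 : ℝ) ≤ if F (s ∪ t) then 1 else 0 := by split_ifs <;> norm_num
    by_cases hUi : ∃ i, U i (s ∪ t)
    · obtain ⟨i, hi⟩ := hUi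
      have := Finset.single_le_sum (f := fun i => if U i (s ∪ t) then (1 : ℝ) else 0)
        (fun i _ => by split_ifs <;> norm_num) (Finset.mem_univ i)
      rw [if_pos hi] at this
      linarith
    by_cases hLi : ∃ i, L i s
    · obtain ⟨i, hi⟩ := hLi
      have := Finset.single_le_sum (f := fun i => if L i s then (1 : ℝ) else 0)
        (fun i _ => by split_ifs <;> norm_num) (Finset.mem_univ i)
      rw [if_pos hi] at this
      linarith
    by_cases hSi : S s t
    · rw [if_pos (hF s hs t ht (not_exists.1 hLi) (not_exists.1 hUi) hSi)]
      linarith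
    · rw [if_pos hSi] at *
      linarith
  have hUsum : ∑ i, expect E p₁ (fun s => expect E p₂ (fun t => if U i (s ∪ t) then 1 else 0)) ≤
      Fintype.card ι * x := by
    rw [← nsmul_eq_mul, ← Finset.card_univ]
    exact Finset.sum_le_card_nsmul _ _ _ fun i _ => (expect_union h _).symm.trans_le (hU i)
  have hLsum : ∑ i, expect E p₁ (fun s => if L i s then 1 else 0) ≤ Fintype.card ι * x := by
    rw [← nsmul_eq_mul, ← Finset.card_univ]
    exact Finset.sum_le_card_nsmul _ _ _ fun i _ => hL i
  have hSle : expect E p₁ (fun s => expect E p₂ (fun t => if ¬ S s t then 1 else 0)) ≤ x :=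
    expect_le_of_le hp₁ hp₁' fun s _ => hS s
  simp only [expect_add, expect_sum, expect_const] at hbound
  rw [← expect_union h (fun s => if F s then 1 else 0)] at hbound
  linarith

lemma exists_forall_abs_binomMean_sub_lt {ι : Type*} [Fintype ι] (m : ℕ) (r : ℝ)
    (φ : ι → ℕ → ℝ) {ε : ℝ} (hε : 0 < ε) :
    ∃ η > 0, ∀ x, |x - r| < η → ∀ i, |binomMean m x (φ i) - binomMean m r (φ i)| < ε := by
  have h : ∀ᶠ x in nhds r, ∀ i, |binomMean m x (φ i) - binomMean m r (φ i)| < ε := by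
    refine Filter.eventually_all.2 fun i => ?_
    exact Metric.continuousAt_iff'.1 (continuous_binomMean m (φ i)).continuousAt ε hε
  obtain ⟨η, hη, h⟩ := Metric.eventually_nhds_iff.1 h
  exact ⟨η, hη, fun x hx => h hx⟩

end Assembly

theorem two_core_size (d : ℕ) (hd : 3 ≤ d) (p q : ℝ)
    (hp : 1 / ((d : ℝ) - 1) < p) (hp1 : p < 1)
    (hq0 : 0 ≤ q) (hq1 : q < 1)
    (hq : q = (1 - p + p * q) ^ (d - 1))
    (ε b : ℝ) (hε : 0 < ε) (hb : 0 < b) :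
    ∃ c > (0:ℝ), ∃ C > (0:ℝ), ∃ R : ℕ, 0 < R ∧
      ∀ (V : Type) [Fintype V] [DecidableEq V] (G : SimpleGraph V),
        IsRegularExpander G b d → (R : ℕ∞) ≤ G.girth →
        1 - C * Real.exp (-c * Fintype.card V) ≤
          percProb G p (fun H =>
            ∀ c₁ : H.ConnectedComponent, IsLargestComp H c₁ →
              |((twoCoreComp H c₁).support.ncard : ℝ) / Fintype.card V
                  - (1 - q - ((d : ℝ) - 1) * p * q * (1 - q))| < ε ∧
              |((twoCoreComp H c₁).edgeSet.ncard : ℝ) / Fintype.card V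
                  - (1 / 2 * p * d * (1 - q) ^ 2)| < ε) := by
  have hd3 : (3 : ℝ) ≤ d := by exact_mod_cast hd
  have hd0 : 0 < d := by omega
  have hp0 : 0 < p := lt_trans (by apply one_div_pos.2; linarith) hp
  obtain ⟨φ, hφ⟩ : ∃ φ : Fin 3 → ℕ → ℝ, φ = ![fun j => if 1 ≤ j then 1 else 0,
    fun j => if 2 ≤ j then 1 else 0, fun j : ℕ => if 2 ≤ j then (j : ℝ) else 0] := ⟨_, rfl⟩
  have hφ0 : φ 0 = fun j => if 1 ≤ j then 1 else 0 := by rw [hφ]; rfl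
  have hφ1 : φ 1 = fun j => if 2 ≤ j then 1 else 0 := by rw [hφ]; rfl
  have hφ2 : φ 2 = fun j : ℕ => if 2 ≤ j then (j : ℝ) else 0 := by rw [hφ]; rfl
  have hφd : ∀ i, ∀ j ≤ d, 0 ≤ φ i j ∧ φ i j ≤ d := by
    intro i j hj
    have hj' : (j : ℝ) ≤ d := by exact_mod_cast hj
    have hj0 : (0 : ℝ) ≤ j := by positivity
    fin_cases i
    · change 0 ≤ φ 0 j ∧ φ 0 j ≤ d
      rw [hφ0]
      dsimp only
      split_ifs <;> constructor <;> linarith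
    · change 0 ≤ φ 1 j ∧ φ 1 j ≤ d
      rw [hφ1]
      dsimp only
      split_ifs <;> constructor <;> linarith
    · change 0 ≤ φ 2 j ∧ φ 2 j ≤ d
      rw [hφ2]
      dsimp only
      split_ifs <;> constructor <;> linarith
  have hr : 1 - p * (1 - q) = 1 - p + p * q := by ring
  have hvert : binomMean d (p * (1 - q)) (φ 1) =
      1 - q - ((d : ℝ) - 1) * p * q * (1 - q) := by
    obtain ⟨m, rfl⟩ : ∃ m, d = m + 1 := ⟨d - 1, by omega⟩
    rw [Nat.add_sub_cancel] at hq
    rw [hφ1, binomMean_two_le, pow_succ, hr, ← hq]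
    push_cast
    ring
  have hedge : binomMean d (p * (1 - q)) (φ 2) / 2 = 1 / 2 * p * d * (1 - q) ^ 2 := by
    obtain ⟨m, rfl⟩ : ∃ m, d = m + 1 := ⟨d - 1, by omega⟩
    rw [Nat.add_sub_cancel] at hq
    rw [hφ2, binomMean_mul_two_le, hr, ← hq]
    push_cast
    ring
  set ε' := ε / ((d + 1) * (d + 3)) with hε'
  have hε'0 : 0 < ε' := by positivity
  have hεε' : (d + 1) * (d + 3) * ε' = ε := by rw [hε']; field_simp
  obtain ⟨η, hη0, hη⟩ := exists_forall_abs_binomMean_sub_lt d (p * (1 - q)) φ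
    (ε := ε' / 4) (by positivity)
  obtain ⟨p₁, hp₁0, hp₁p, k₀, hk₀⟩ := exists_extProb_close hd hp0 hp1 hq0 hq1 hq hη0
  have hp₁1 : 0 < 1 - p₁ := by linarith
  obtain ⟨p₂, hp₂⟩ : ∃ p₂, p₂ = (p - p₁) / (1 - p₁) := ⟨_, rfl⟩
  have hp₂0 : 0 < p₂ := hp₂ ▸ div_pos (by linarith) hp₁1
  have hp₂1 : p₂ ≤ 1 := hp₂ ▸ (div_le_one hp₁1).2 (by linarith)
  have hpp : 1 - p = (1 - p₁) * (1 - p₂) := by rw [hp₂]; field_simp; ring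
  obtain ⟨δ, hδ0, R₀, -, c₀, hc₀, hkey⟩ := exists_expect_not_unsplit_le hb d hp₂0 hp₂1 hε'0
  obtain ⟨k₁, hk₁⟩ := exists_nat_gt (1 / δ)
  set k := max k₀ (max R₀ k₁) with hk
  have hδk : 1 ≤ δ * (k + 1) := by
    have h1 : (k₁ : ℝ) ≤ k := by
      exact_mod_cast (le_max_right R₀ k₁).trans (le_max_right k₀ _)
    rw [div_lt_iff₀ hδ0] at hk₁
    nlinarith
  obtain ⟨R₁, hR₁⟩ := exists_nat_gt (((d : ℝ) + 1) ^ (k + 1) / (2 * ε'))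
  rw [div_lt_iff₀ (by positivity)] at hR₁
  have hrate := statRate_pos hd0 k (η := ε' / 4) (by positivity)
  refine ⟨min (statRate d k (ε' / 4)) c₀, lt_min hrate hc₀, 7, by norm_num,
    max (2 * k + 3) R₁, lt_max_of_lt_left (by omega), fun V _ _ G hG hgirth => ?_⟩
  have hgirth' : max (2 * k + 3) R₁ ≤ G.girth := by exact_mod_cast hgirth
  have hg : 2 * k + 2 < G.girth := (le_max_left (2 * k + 3) R₁).trans hgirth'
  have hRn : (R₁ : ℝ) ≤ Fintype.card V := by
    exact_mod_cast ((le_max_right (2 * k + 3) R₁).trans hgirth').trans (girth_le_card G)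
  have hn : 0 < Fintype.card V := (by omega : 0 < G.girth).trans_le (girth_le_card G)
  have : Nonempty V := Fintype.card_pos_iff.1 hn
  have hn0 : (0 : ℝ) < Fintype.card V := by exact_mod_cast hn
  have hM : ((d : ℝ) + 1) ^ (k + 1) ≤ 2 * (ε' * Fintype.card V) := by nlinarith
  obtain ⟨hclose, hclose₁⟩ := hk₀ k (le_max_left _ _)
  set c := min (statRate d k (ε' / 4)) c₀
  have hexp : ∀ c' ≥ c, Real.exp (-c' * Fintype.card V) ≤ Real.exp (-c * Fintype.card V) := by
    intro c' hc'
    gcongr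
  have htail := fun i => stat_tails hp0.le hp1.le hd0 hG.2 hg (hφd i) (η := ε' / 4) (by positivity)
  have htail₁ := fun i =>
    stat_tails hp₁0.le (by linarith) hd0 hG.2 hg (hφd i) (η := ε' / 4) (by positivity)
  have key := one_sub_le_expect (ι := Fin 3) hpp hp₁0.le (by linarith) hp₂0.le hp₂1
    (F := fun s => ∀ c₁ : (keep G s).ConnectedComponent, IsLargestComp (keep G s) c₁ →
      |((twoCoreComp (keep G s) c₁).support.ncard : ℝ) / Fintype.card V
          - (1 - q - ((d : ℝ) - 1) * p * q * (1 - q))| < ε ∧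
      |((twoCoreComp (keep G s) c₁).edgeSet.ncard : ℝ) / Fintype.card V
          - (1 / 2 * p * d * (1 - q) ^ 2)| < ε)
    (S := fun s t => Unsplit G R₀ δ ε' s t) ?_
    (fun i => (htail₁ i).2.trans (hexp _ (min_le_left _ _)))
    (fun i => (htail i).1.trans (hexp _ (min_le_left _ _)))
    (fun s => (hkey R₀ le_rfl V G hG.1 s).trans (hexp _ (min_le_right _ _)))
  · rw [Fintype.card_fin] at key
    rw [show (2 * ((3 : ℕ) : ℝ) + 1) = 7 by norm_num] at key
    refine key.trans (le_of_eq (expect_congr fun s hs => ?_))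
    rw [keep_eq hs]
  · intro s _ t _ hL hU hS c₁ hc₁
    have hlow : ∀ i, Fintype.card V * (binomMean d (p * (1 - q)) (φ i) - ε' / 2) ≤
        stat G k (φ i) s := by
      intro i
      have h1 := not_le.1 (hL i)
      have h2 := abs_lt.1 (hη _ hclose₁ i)
      exact (mul_le_mul_of_nonneg_left (by linarith) hn0.le).trans h1.le
    have hupp : ∀ i, stat G k (φ i) (s ∪ t) ≤
        Fintype.card V * (binomMean d (p * (1 - q)) (φ i) + ε' / 2) := by
      intro i
      have h1 := not_le.1 (hU i)
      have h2 := abs_lt.1 (hη _ hclose i)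
      exact h1.le.trans (mul_le_mul_of_nonneg_left (by linarith) hn0.le)
    have := Unsplit.core_size (d := d) hS hδ0.le hε'0 hδk (by omega) hG.1.1 (by omega)
      ((le_max_left R₀ k₁).trans (le_max_right k₀ _)) hM (hφ0 ▸ hlow 0) (hφ1 ▸ hlow 1)
      (hφ2 ▸ hlow 2) (hφ0 ▸ hupp 0) (hφ1 ▸ hupp 1) (hφ2 ▸ hupp 2) hc₁
    rwa [← hφ1, ← hφ2, hvert, hedge, hεε'] at this

end Percolation

end
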